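/- arXiv:math-ph/0703046 — 2 statements merged into one kernel-verified Lean document; each statement's English description precedes it below -/
import Mathlib

section
/- Let μ be a continuous non-negative function on [0,1], not identically zero, three times continuously differentiable, with μ(1) ≠ 0, and suppose either μ(0) ≠ 0 or μ(α) ∼ a α^ν as α → 0⁺ for some a > 0, ν > 0. Let κ : (0,∞) → ℝ be continuous and locally integrable with absolutely convergent Laplace transform ∫₀^∞ e^{−pt} κ(t) dt = 1/(p K(p)) for every real p > 0. Then κ is infinitely differentiable on (0,∞) and completely monotone. -/
open MeasureTheory Filter Set

/-- `K(p) = ∫₀¹ p^{α-1} μ(α) dα` for real `p > 0`. -/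
noncomputable def Kreal (μ : ℝ → ℝ) (p : ℝ) : ℝ :=
  ∫ α in (0:ℝ)..1, p ^ (α - 1) * μ α

/-- A function `f` is completely monotone on `(0,∞)` if it is infinitely
differentiable there and `(-1)^n f⁽ⁿ⁾(t) ≥ 0` for all `t > 0` and `n ≥ 0`. -/
def CompletelyMonotoneOn (f : ℝ → ℝ) : Prop :=
  ContDiffOn ℝ (⊤ : ℕ∞) f (Set.Ioi 0) ∧
  ∀ n : ℕ, ∀ t : ℝ, 0 < t →
    0 ≤ (-1 : ℝ) ^ n * iteratedDerivWithin n f (Set.Ioi 0) t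

/-! For real `p > 0`, `p * Kreal μ p` is the value at `z = log p` of the entire function
`G z = ∫ exp (α z) μ(α) dα`. In the strip `|Im z| ≤ π`, multiplying by `exp (-i * Im z / 2)` brings
all the phases `Im z * α` into `[-π / 2, π / 2]`, which gives `Im G (x + iπ) ≤ |G (x + iy)|`; by
Jensen's inequality the left-hand side is at least `c * exp (a x)` for some `c > 0` and `0 < a < 1`.
So `1 / G` is holomorphic in the strip and bounded by a multiple of `exp (-a x)`, and the Poisson
formula for the strip writes `1 / (p * Kreal μ p)` as the Stieltjes transform
`π⁻¹ * ∫ (p + exp x)⁻¹ * exp x * (-Im (1 / G (x + iπ))) dx`, whose density is non-negative. It is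
the Laplace transform of a mixture of the exponentials `t ↦ exp (-t * exp x)`, and by Lerch's
theorem this completely monotone function is `κ`. -/

section Moments

variable {Ω E : Type*} {mΩ : MeasurableSpace Ω} {ν : Measure Ω} [NormedAddCommGroup E]
  [NormedSpace ℝ E] {X : Ω → ℝ} {F : Ω → E} {a b : ℝ}

lemma integrable_continuous_comp_smul (hX : AEMeasurable X ν) (hXab : ∀ᵐ ω ∂ν, X ω ∈ Icc a b)
    (hF : Integrable F ν) {h : ℝ → ℝ} (hh : Continuous h) :
    Integrable (fun ω => h (X ω) • F ω) ν := by
  obtain ⟨M, hM⟩ := isCompact_Icc.exists_bound_of_continuousOn hh.continuousOn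
  exact hF.bdd_smul M (hh.measurable.comp_aemeasurable hX).aestronglyMeasurable
    (hXab.mono fun ω hω => hM _ hω)

lemma integrable_continuous_comp [IsFiniteMeasure ν] (hX : AEMeasurable X ν)
    (hXab : ∀ᵐ ω ∂ν, X ω ∈ Icc a b) {h : ℝ → ℝ} (hh : Continuous h) :
    Integrable (fun ω => h (X ω)) ν := by
  simpa using integrable_continuous_comp_smul hX hXab (integrable_const (1 : ℝ)) hh

lemma integral_polynomial_eval_smul_eq_zero (hX : AEMeasurable X ν)
    (hXab : ∀ᵐ ω ∂ν, X ω ∈ Icc a b) (hF : Integrable F ν)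
    (hmom : ∀ n : ℕ, ∫ ω, X ω ^ n • F ω ∂ν = 0) (q : Polynomial ℝ) :
    ∫ ω, q.eval (X ω) • F ω ∂ν = 0 := by
  simp_rw [Polynomial.eval_eq_sum_range, Finset.sum_smul, mul_smul]
  have hint (n : ℕ) : Integrable (fun ω => q.coeff n • X ω ^ n • F ω) ν :=
    (integrable_continuous_comp_smul hX hXab hF (continuous_pow n)).smul (q.coeff n)
  rw [integral_finsetSum _ fun n _ => hint n]
  simp [integral_smul, hmom]

lemma integral_continuous_comp_smul_eq_zero_of_moments_eq_zero (hX : AEMeasurable X ν)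
    (hXab : ∀ᵐ ω ∂ν, X ω ∈ Icc a b) (hF : Integrable F ν)
    (hmom : ∀ n : ℕ, ∫ ω, X ω ^ n • F ω ∂ν = 0) {h : ℝ → ℝ} (hh : Continuous h) :
    ∫ ω, h (X ω) • F ω ∂ν = 0 := by
  have approx : ∀ ε > 0, ‖∫ ω, h (X ω) • F ω ∂ν‖ ≤ ε * ∫ ω, ‖F ω‖ ∂ν := by
    intro ε hε
    obtain ⟨q, hq⟩ := exists_polynomial_near_of_continuousOn a b h hh.continuousOn ε hε
    have hint : ∫ ω, (h (X ω) - q.eval (X ω)) • F ω ∂ν = ∫ ω, h (X ω) • F ω ∂ν := by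
      simp_rw [sub_smul]
      rw [integral_sub (integrable_continuous_comp_smul hX hXab hF hh)
        (integrable_continuous_comp_smul hX hXab hF q.continuous),
        integral_polynomial_eval_smul_eq_zero hX hXab hF hmom, sub_zero]
    rw [← hint, ← integral_const_mul]
    refine norm_integral_le_of_norm_le (hF.norm.const_mul ε) (hXab.mono fun ω hω => ?_)
    rw [norm_smul, norm_sub_rev]
    exact mul_le_mul_of_nonneg_right (hq _ hω).le (norm_nonneg _)
  have hlim : Tendsto (fun ε : ℝ => ε * ∫ ω, ‖F ω‖ ∂ν) (nhdsWithin 0 (Ioi 0)) (nhds 0) := by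
    have hid : Tendsto (fun ε : ℝ => ε) (nhdsWithin 0 (Ioi 0)) (nhds 0) :=
      tendsto_nhdsWithin_of_tendsto_nhds tendsto_id
    simpa using hid.mul_const (∫ ω, ‖F ω‖ ∂ν)
  exact norm_le_zero_iff.1
    (ge_of_tendsto hlim (eventually_mem_nhdsWithin.mono fun ε hε => approx ε hε))

end Moments

section Lerch

variable {E : Type*} [NormedAddCommGroup E] [NormedSpace ℝ E]

lemma continuous_comp_neg_log {Y : Type*} [TopologicalSpace Y] {g : ℝ → Y} (hg : Continuous g)
    (hlim : Tendsto g atTop (nhds (g 0))) : Continuous fun s => g (-Real.log s) := by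
  refine continuous_iff_continuousAt.2 fun s => ?_
  rcases eq_or_ne s 0 with rfl | hs
  · rw [continuousAt_iff_punctured_nhds]
    simpa [Function.comp_def] using
      hlim.comp (tendsto_neg_atBot_atTop.comp Real.tendsto_log_nhdsNE_zero)
  · exact hg.continuousAt.comp (Real.continuousAt_log hs).neg

/- Under `s = exp (-t)` the values of the Laplace transform at the positive integers are the moments
of a function on `(0, 1)`. -/
lemma ae_eq_zero_of_laplace_nat_eq_zero [CompleteSpace E] {f : ℝ → E}
    (hf : IntegrableOn (fun t => Real.exp (-t) • f t) (Ioi 0))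
    (hlap : ∀ n : ℕ, ∫ t in Ioi (0 : ℝ), Real.exp (-(n + 1) * t) • f t = 0) :
    f =ᵐ[volume.restrict (Ioi 0)] 0 := by
  have hmem : ∀ᵐ t ∂volume.restrict (Ioi (0 : ℝ)), Real.exp (-t) ∈ Icc (0 : ℝ) 1 := by
    filter_upwards [ae_restrict_mem measurableSet_Ioi] with t ht
    exact ⟨(Real.exp_pos _).le, Real.exp_le_one_iff.2 (neg_nonpos.2 (le_of_lt ht))⟩
  have hmom (n : ℕ) :
      ∫ t in Ioi (0 : ℝ), Real.exp (-t) ^ n • Real.exp (-t) • f t = 0 := by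
    rw [← hlap n]
    congr with t
    rw [smul_smul, ← Real.exp_nat_mul, ← Real.exp_add]
    ring_nf
  have htest (g : ℝ → ℝ) (hg : Continuous g) (hgc : HasCompactSupport g)
      (hgs : tsupport g ⊆ Ioi 0) : ∫ t, g t • Real.exp (-t) • f t = 0 := by
    have hg0 : g 0 = 0 := image_eq_zero_of_notMem_tsupport fun h => lt_irrefl (0 : ℝ) (hgs h)
    have hcont : Continuous fun s => g (-Real.log s) :=
      continuous_comp_neg_log hg
        (by rw [hg0]; exact hgc.is_zero_at_infty.mono_left atTop_le_cocompact)
    rw [← setIntegral_eq_integral_of_forall_compl_eq_zero (s := Ioi 0) fun t ht => by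
      rw [image_eq_zero_of_notMem_tsupport fun h => ht (hgs h), zero_smul]]
    simpa using integral_continuous_comp_smul_eq_zero_of_moments_eq_zero (by fun_prop) hmem hf
      hmom hcont
  rw [EventuallyEq, ae_restrict_iff' measurableSet_Ioi]
  filter_upwards [isOpen_Ioi.ae_eq_zero_of_integral_contDiff_smul_eq_zero hf.locallyIntegrableOn
    fun g hg hgc hgs => htest g hg.continuous hgc hgs] with t ht ht0
  exact (smul_eq_zero.1 (ht ht0)).resolve_left (Real.exp_pos _).ne'

lemma eqOn_of_laplace_eq [CompleteSpace E] {f g : ℝ → E} (hf : ContinuousOn f (Ioi 0))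
    (hg : ContinuousOn g (Ioi 0))
    (hfi : ∀ p > 0, IntegrableOn (fun t => Real.exp (-p * t) • f t) (Ioi 0))
    (hgi : ∀ p > 0, IntegrableOn (fun t => Real.exp (-p * t) • g t) (Ioi 0))
    (hlap : ∀ p > 0, ∫ t in Ioi (0 : ℝ), Real.exp (-p * t) • f t =
      ∫ t in Ioi (0 : ℝ), Real.exp (-p * t) • g t) : EqOn f g (Ioi 0) := by
  have hae : (fun t => f t - g t) =ᵐ[volume.restrict (Ioi 0)] 0 := by
    refine ae_eq_zero_of_laplace_nat_eq_zero ?_ fun n => ?_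
    · simpa [smul_sub, Pi.sub_def] using (hfi 1 one_pos).sub (hgi 1 one_pos)
    · have hn : (0 : ℝ) < n + 1 := by positivity
      simp_rw [smul_sub]
      rw [integral_sub (hfi _ hn) (hgi _ hn), hlap _ hn, sub_self]
  exact Measure.eqOn_open_of_ae_eq (hae.mono fun t => sub_eq_zero.1) isOpen_Ioi hf hg

end Lerch

section Stieltjes

open ProbabilityTheory

variable {Ω : Type*} {mΩ : MeasurableSpace Ω} {ν : Measure Ω} {X : Ω → ℝ}

lemma completelyMonotoneOn_mgf_neg (hX : 0 ≤ᵐ[ν] X)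
    (hint : ∀ t > 0, Integrable (fun ω => Real.exp (t * -X ω)) ν) :
    CompletelyMonotoneOn (mgf (-X) ν) := by
  have hmem : Ioi 0 ⊆ interior (integrableExpSet (-X) ν) :=
    interior_maximal (fun t ht => hint t ht) isOpen_Ioi
  refine ⟨(analyticOnNhd_mgf.mono hmem).contDiffOn isOpen_Ioi.uniqueDiffOn, fun n t ht => ?_⟩
  rw [iteratedDerivWithin_of_isOpen isOpen_Ioi ht, iteratedDeriv_mgf (hmem ht),
    ← integral_const_mul]
  refine integral_nonneg_of_ae (hX.mono fun ω hω => ?_)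
  have hpow : (-1 : ℝ) ^ n * (-X ω) ^ n = X ω ^ n := by rw [← mul_pow, neg_one_mul, neg_neg]
  simp only [Pi.zero_apply, Pi.neg_apply, ← mul_assoc, hpow]
  exact mul_nonneg (pow_nonneg hω n) (Real.exp_pos _).le

lemma integrable_exp_mul_neg_of_integrable_inv_add (hX : 0 ≤ᵐ[ν] X) (hXm : AEMeasurable X ν)
    {t : ℝ} (ht : 0 < t) (hint : Integrable (fun ω => (t⁻¹ + X ω)⁻¹) ν) :
    Integrable (fun ω => Real.exp (t * -X ω)) ν := by
  refine (hint.const_mul t⁻¹).mono' (by fun_prop) (hX.mono fun ω hω => ?_)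
  have hω : 0 ≤ X ω := hω
  calc ‖Real.exp (t * -X ω)‖ = (Real.exp (t * X ω))⁻¹ := by
        rw [Real.norm_of_nonneg (Real.exp_pos _).le, mul_neg, Real.exp_neg]
    _ ≤ (1 + t * X ω)⁻¹ := by
        gcongr
        linarith [Real.add_one_le_exp (t * X ω)]
    _ = t⁻¹ * (t⁻¹ + X ω)⁻¹ := by
        rw [← mul_inv, mul_add, mul_inv_cancel₀ ht.ne']

lemma integrable_prod_exp_neg_add_mul [SFinite ν] (hX : 0 ≤ᵐ[ν] X) (hXm : AEMeasurable X ν)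
    {p : ℝ} (hp : 0 < p) (hint : Integrable (fun ω => (p + X ω)⁻¹) ν) :
    Integrable (fun z : ℝ × Ω => Real.exp (-(p + X z.2) * z.1))
      ((volume.restrict (Ioi 0)).prod ν) := by
  have hneg : ∀ᵐ ω ∂ν, -(p + X ω) < 0 := hX.mono fun ω hω => by
    have : 0 ≤ X ω := hω
    linarith
  have : AEMeasurable (fun z : ℝ × Ω => X z.2) ((volume.restrict (Ioi 0)).prod ν) :=
    hXm.comp_quasiMeasurePreserving Measure.quasiMeasurePreserving_snd
  rw [integrable_prod_iff' (by fun_prop)]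
  refine ⟨hneg.mono fun ω hω => integrableOn_exp_mul_Ioi hω 0, hint.congr ?_⟩
  filter_upwards [hneg] with ω hω
  simp_rw [Real.norm_of_nonneg (Real.exp_pos _).le]
  rw [integral_exp_mul_Ioi hω, mul_zero, Real.exp_zero, neg_div_neg_eq, one_div]

lemma laplace_mgf_neg [SFinite ν] (hX : 0 ≤ᵐ[ν] X) (hXm : AEMeasurable X ν) {p : ℝ} (hp : 0 < p)
    (hint : Integrable (fun ω => (p + X ω)⁻¹) ν) :
    IntegrableOn (fun t => Real.exp (-p * t) * mgf (-X) ν t) (Ioi 0) ∧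
      ∫ t in Ioi (0 : ℝ), Real.exp (-p * t) * mgf (-X) ν t = ∫ ω, (p + X ω)⁻¹ ∂ν := by
  have hprod := integrable_prod_exp_neg_add_mul hX hXm hp hint
  have hmgf : (fun t => Real.exp (-p * t) * mgf (-X) ν t) =
      fun t => ∫ ω, Real.exp (-(p + X ω) * t) ∂ν := by
    funext t
    rw [mgf, ← integral_const_mul]
    congr with ω
    rw [← Real.exp_add, Pi.neg_apply]
    ring_nf
  rw [hmgf]
  refine ⟨hprod.integral_prod_left, ?_⟩
  rw [integral_integral_swap hprod]
  refine integral_congr_ae (hX.mono fun ω hω => ?_)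
  have hω : -(p + X ω) < 0 := by
    have : 0 ≤ X ω := hω
    linarith
  simp only
  rw [integral_exp_mul_Ioi hω, mul_zero, Real.exp_zero, neg_div_neg_eq, one_div]

theorem completelyMonotoneOn_of_laplace_eq_integral_inv_add [SFinite ν] (hX : 0 ≤ᵐ[ν] X)
    (hXm : AEMeasurable X ν) (hint : ∀ p > 0, Integrable (fun ω => (p + X ω)⁻¹) ν)
    {κ : ℝ → ℝ} (hκ : ContinuousOn κ (Ioi 0))
    (hκi : ∀ p > 0, IntegrableOn (fun t => Real.exp (-p * t) * κ t) (Ioi 0))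
    (hlap : ∀ p > 0, ∫ t in Ioi (0 : ℝ), Real.exp (-p * t) * κ t = ∫ ω, (p + X ω)⁻¹ ∂ν) :
    CompletelyMonotoneOn κ := by
  have hcm : CompletelyMonotoneOn (mgf (-X) ν) := completelyMonotoneOn_mgf_neg hX fun t ht =>
    integrable_exp_mul_neg_of_integrable_inv_add hX hXm ht (hint _ (inv_pos.2 ht))
  have hmgf := fun p (hp : 0 < p) => laplace_mgf_neg hX hXm hp (hint p hp)
  have heq : EqOn κ (mgf (-X) ν) (Ioi 0) :=
    eqOn_of_laplace_eq hκ hcm.1.continuousOn hκi (fun p hp => (hmgf p hp).1)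
      fun p hp => (hlap p hp).trans (hmgf p hp).2.symm
  refine ⟨hcm.1.congr heq, fun n t ht => ?_⟩
  rw [iteratedDerivWithin_congr heq ht]
  exact hcm.2 n t ht

theorem completelyMonotoneOn_of_laplace_eq_integral_inv_add_mul [SFinite ν] {w : Ω → ℝ}
    (hw : ∀ ω, 0 ≤ w ω) (hwm : AEMeasurable w ν) (hX : ∀ ω, 0 ≤ X ω) (hXm : AEMeasurable X ν)
    (hint : ∀ p > 0, Integrable (fun ω => (p + X ω)⁻¹ * w ω) ν)
    {κ : ℝ → ℝ} (hκ : ContinuousOn κ (Ioi 0))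
    (hκi : ∀ p > 0, IntegrableOn (fun t => Real.exp (-p * t) * κ t) (Ioi 0))
    (hlap : ∀ p > 0, ∫ t in Ioi (0 : ℝ), Real.exp (-p * t) * κ t = ∫ ω, (p + X ω)⁻¹ * w ω ∂ν) :
    CompletelyMonotoneOn κ := by
  have hfin : ∀ᵐ ω ∂ν, ENNReal.ofReal (w ω) < ⊤ := .of_forall fun _ => ENNReal.ofReal_lt_top
  have hsmul (p : ℝ) (ω : Ω) :
      (ENNReal.ofReal (w ω)).toReal • (p + X ω)⁻¹ = (p + X ω)⁻¹ * w ω := by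
    rw [ENNReal.toReal_ofReal (hw ω), smul_eq_mul, mul_comm]
  refine completelyMonotoneOn_of_laplace_eq_integral_inv_add
    (ν := ν.withDensity fun ω => ENNReal.ofReal (w ω)) (.of_forall hX)
    (hXm.mono_ac (withDensity_absolutelyContinuous _ _)) (fun p hp => ?_) hκ hκi fun p hp => ?_
  · rw [integrable_withDensity_iff_integrable_smul₀' hwm.ennreal_ofReal hfin]
    simpa only [hsmul] using hint p hp
  · rw [hlap p hp, integral_withDensity_eq_integral_toReal_smul₀ hwm.ennreal_ofReal hfin]
    simp_rw [hsmul]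

end Stieltjes

section Contour

open Complex Asymptotics
open scoped Filter

variable {E : Type*} [NormedAddCommGroup E] [NormedSpace ℂ E] {h : ℂ → E} {g : ℝ → ℝ} {a b y : ℝ}

lemma continuousOn_im_preimage_Icc_of_diffContOnCl (hab : a < b)
    (hd : DiffContOnCl ℂ h (im ⁻¹' Ioo a b)) : ContinuousOn h (im ⁻¹' Icc a b) := by
  simpa only [closure_preimage_im, closure_Ioo hab.ne] using hd.continuousOn

lemma tendsto_ofReal_add_mul_I (hy : y ∈ Icc a b) :
    Tendsto (fun x : ℝ => (x : ℂ) + y * I) (cocompact ℝ)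
      (comap re (cocompact ℝ) ⊓ 𝓟 (im ⁻¹' Icc a b)) := by
  have hre : (re ∘ fun x : ℝ => (x : ℂ) + y * I) = id := by
    funext x
    simp
  refine tendsto_inf.2 ⟨tendsto_comap_iff.2 ?_, tendsto_principal.2 (.of_forall fun x => ?_)⟩
  · rw [hre]
    exact tendsto_id
  · simpa using hy

lemma integrable_ofReal_add_mul_I_of_isBigO (hab : a < b) (hd : DiffContOnCl ℂ h (im ⁻¹' Ioo a b))
    (hO : h =O[comap re (cocompact ℝ) ⊓ 𝓟 (im ⁻¹' Icc a b)] (g ∘ re)) (hg : Integrable g)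
    (hy : y ∈ Icc a b) : Integrable fun x : ℝ => h (x + y * I) := by
  have hcont : Continuous fun x : ℝ => h (x + y * I) :=
    (continuousOn_im_preimage_Icc_of_diffContOnCl hab hd).comp_continuous (by fun_prop)
      fun x => by simpa using hy
  refine hcont.locallyIntegrable.integrable_of_isBigO_cocompact ?_ (hg.integrableAtFilter _)
  simpa [Function.comp_def] using hO.comp_tendsto (tendsto_ofReal_add_mul_I hy)

lemma tendsto_intervalIntegral_vertical (hab : a ≤ b)
    (hlim : Tendsto h (comap re (cocompact ℝ) ⊓ 𝓟 (im ⁻¹' Icc a b)) (nhds 0)) {ι : Type*}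
    {l : Filter ι} {r : ι → ℝ} (hr : Tendsto r l (cocompact ℝ)) :
    Tendsto (fun i => ∫ y in a..b, h (r i + y * I)) l (nhds 0) := by
  refine Metric.tendsto_nhds.2 fun ε hε => ?_
  have hba := sub_nonneg.2 hab
  have hsmall := Metric.tendsto_nhds.1 hlim (ε / (b - a + 1)) (by positivity)
  rw [eventually_inf_principal, eventually_comap] at hsmall
  filter_upwards [hr.eventually hsmall] with i hi
  rw [dist_zero_right]
  calc ‖∫ y in a..b, h (r i + y * I)‖ ≤ ε / (b - a + 1) * |b - a| := by
        refine intervalIntegral.norm_integral_le_of_norm_le_const fun y hy => ?_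
        rw [uIoc_of_le hab] at hy
        simpa using (hi (r i + y * I) (by simp) (by simpa using Ioc_subset_Icc_self hy)).le
    _ < ε := by
        rw [abs_of_nonneg hba, div_mul_eq_mul_div, div_lt_iff₀ (by positivity)]
        nlinarith

theorem integral_ofReal_add_mul_I_eq_of_isBigO (hab : a < b)
    (hd : DiffContOnCl ℂ h (im ⁻¹' Ioo a b))
    (hO : h =O[comap re (cocompact ℝ) ⊓ 𝓟 (im ⁻¹' Icc a b)] (g ∘ re)) (hg : Integrable g)
    (hg0 : Tendsto g (cocompact ℝ) (nhds 0)) :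
    ∫ x : ℝ, h (x + a * I) = ∫ x : ℝ, h (x + b * I) := by
  have hlim : Tendsto h (comap re (cocompact ℝ) ⊓ 𝓟 (im ⁻¹' Icc a b)) (nhds 0) :=
    hO.trans_tendsto ((hg0.comp tendsto_comap).mono_left inf_le_left)
  have hrect (R : ℝ) : (∫ x in -R..R, h (x + a * I)) - (∫ x in -R..R, h (x + b * I)) +
      I • (∫ y in a..b, h (R + y * I)) - I • (∫ y in a..b, h ((-R : ℝ) + y * I)) = 0 := by
    refine integral_boundary_rect_eq_zero_of_continuousOn_of_differentiableOn h ⟨-R, a⟩ ⟨R, b⟩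
      ?_ ?_
    · refine (continuousOn_im_preimage_Icc_of_diffContOnCl hab hd).mono fun z hz => ?_
      simpa only [uIcc_of_le hab.le] using hz.2
    · refine hd.differentiableOn.mono fun z hz => ?_
      simpa only [min_eq_left hab.le, max_eq_right hab.le] using hz.2
  have hhor {y : ℝ} (hy : y ∈ Icc a b) := intervalIntegral_tendsto_integral
    (integrable_ofReal_add_mul_I_of_isBigO hab hd hO hg hy) tendsto_neg_atTop_atBot tendsto_id
  have hleft := tendsto_intervalIntegral_vertical hab.le hlim
    (tendsto_neg_atTop_atBot.mono_right atBot_le_cocompact)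
  have hright := tendsto_intervalIntegral_vertical hab.le hlim
    (tendsto_id.mono_right atTop_le_cocompact)
  have hsum := (((hhor ⟨le_rfl, hab.le⟩).sub (hhor ⟨hab.le, le_rfl⟩)).add
    (hright.const_smul I)).sub (hleft.const_smul I)
  simp only [id, hrect, smul_zero, add_zero, sub_zero] at hsum
  exact (sub_eq_zero.1 (tendsto_nhds_unique tendsto_const_nhds hsum).symm)

end Contour

section SechKernel

open Asymptotics

lemma integrable_exp_neg_mul_abs {c : ℝ} (hc : 0 < c) :
    Integrable fun x : ℝ => Real.exp (-c * |x|) := by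
  rw [← integrableOn_univ, ← Iic_union_Ioi (a := (0 : ℝ)), integrableOn_union]
  refine ⟨(integrableOn_exp_mul_Iic hc 0).congr_fun (fun x hx => ?_) measurableSet_Iic,
    (integrableOn_exp_mul_Ioi (neg_lt_zero.2 hc) 0).congr_fun (fun x hx => ?_) measurableSet_Ioi⟩
  · simp [abs_of_nonpos (mem_Iic.1 hx)]
  · simp [abs_of_pos (mem_Ioi.1 hx)]

lemma tendsto_exp_neg_mul_abs_cocompact {c : ℝ} (hc : 0 < c) :
    Tendsto (fun x : ℝ => Real.exp (-c * |x|)) (cocompact ℝ) (nhds 0) :=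
  Real.tendsto_exp_atBot.comp
    (tendsto_norm_cocompact_atTop.const_mul_atTop_of_neg (neg_lt_zero.2 hc))

lemma exp_abs_half_le_two_mul_cosh_half (x : ℝ) :
    Real.exp (|x| / 2) ≤ 2 * Real.cosh (x / 2) := by
  rw [← Real.cosh_abs, Real.cosh_eq, abs_div, abs_two]
  linarith [Real.exp_pos (-(|x| / 2))]

lemma integrable_inv_cosh_half : Integrable fun x : ℝ => (Real.cosh (x / 2))⁻¹ := by
  have hcont : Continuous fun x : ℝ => (Real.cosh (x / 2))⁻¹ :=
    Continuous.inv₀ (by fun_prop) fun x => (Real.cosh_pos _).ne'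
  refine ((integrable_exp_neg_mul_abs one_half_pos).const_mul 2).mono' hcont.aestronglyMeasurable
    (.of_forall fun x => ?_)
  rw [Real.norm_of_nonneg (inv_pos.2 (Real.cosh_pos _)).le, inv_le_iff_one_le_mul₀
    (Real.cosh_pos _), mul_right_comm]
  calc (1 : ℝ) = Real.exp (|x| / 2) * Real.exp (-(1 / 2) * |x|) := by
        rw [← Real.exp_add]; ring_nf; simp
    _ ≤ _ := by gcongr; exact exp_abs_half_le_two_mul_cosh_half x

lemma integral_inv_cosh_half : ∫ x : ℝ, (Real.cosh (x / 2))⁻¹ = 2 * Real.pi := by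
  have hderiv (x : ℝ) :
      HasDerivAt (fun x => 2 * Real.arctan (Real.sinh (x / 2))) (Real.cosh (x / 2))⁻¹ x := by
    have hcosh := (Real.cosh_pos (x / 2)).ne'
    convert! (((hasDerivAt_id x).div_const 2).sinh.arctan.const_mul 2) using 1
    rw [id, ← Real.cosh_sq']
    field_simp
  have htop : Tendsto (fun x : ℝ => x / 2) atTop atTop := tendsto_id.atTop_div_const two_pos
  have hbot : Tendsto (fun x : ℝ => x / 2) atBot atBot := tendsto_id.atBot_div_const two_pos
  rw [integral_of_hasDerivAt_of_tendsto hderiv integrable_inv_cosh_half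
    (((Real.tendsto_arctan_atBot.mono_right nhdsWithin_le_nhds).comp
      (Real.sinhOrderIso.tendsto_atBot.comp hbot)).const_mul 2)
    (((Real.tendsto_arctan_atTop.mono_right nhdsWithin_le_nhds).comp
      (Real.sinhOrderIso.tendsto_atTop.comp htop)).const_mul 2)]
  ring

lemma abs_sinh_re_le_norm_sinh (z : ℂ) : |Real.sinh z.re| ≤ ‖Complex.sinh z‖ := by
  have h := abs_norm_sub_norm_le (Complex.exp z) (Complex.exp (-z))
  rw [Complex.norm_exp, Complex.norm_exp, Complex.neg_re] at h
  rw [Real.sinh_eq, Complex.sinh, norm_div, abs_div, Complex.norm_ofNat, abs_two]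
  gcongr

lemma sinh_ne_zero_of_abs_im_lt_pi {z : ℂ} (hz : z ≠ 0) (him : |z.im| < Real.pi) :
    Complex.sinh z ≠ 0 := by
  intro h
  have hre : z.re = 0 := by
    have := abs_sinh_re_le_norm_sinh z
    rw [h, norm_zero] at this
    exact Real.sinh_eq_zero.1 (abs_nonpos_iff.1 this)
  have hzI : z = z.im * Complex.I := by
    rw [← Complex.re_add_im z]
    simp [hre]
  rw [hzI, Complex.sinh_mul_I, mul_eq_zero, or_iff_left Complex.I_ne_zero] at h
  have him0 : z.im = 0 := (Real.sin_eq_zero_iff_of_lt_of_lt (abs_lt.1 him).1 (abs_lt.1 him).2).1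
    (by exact_mod_cast h)
  exact hz (by rw [hzI, him0]; simp)

lemma isBigO_inv_sinh_half :
    (fun z : ℂ => (Complex.sinh (z / 2))⁻¹) =O[comap Complex.re (cocompact ℝ)]
      fun z => Real.exp (-(1 / 2) * |z.re|) := by
  have hlarge : ∀ᶠ z in comap Complex.re (cocompact ℝ), 1 ≤ |z.re| :=
    (tendsto_norm_cocompact_atTop.comp tendsto_comap).eventually_ge_atTop 1
  refine IsBigO.of_bound 4 (hlarge.mono fun z hz => ?_)
  have hre : (z / 2).re = z.re / 2 := by simp
  have hsinh : Real.exp (|z.re| / 2) ≤ 4 * ‖Complex.sinh (z / 2)‖ := by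
    refine le_trans ?_ (mul_le_mul_of_nonneg_left (abs_sinh_re_le_norm_sinh _) (by norm_num))
    have hexp : 1 + |z.re| ≤ Real.exp (|z.re| / 2) * Real.exp (|z.re| / 2) := by
      rw [← Real.exp_add, add_halves, add_comm]
      exact Real.add_one_le_exp _
    have hinv : Real.exp (|z.re| / 2) * Real.exp (-(|z.re| / 2)) = 1 := by
      rw [← Real.exp_add, add_neg_cancel, Real.exp_zero]
    rw [hre, Real.abs_sinh, Real.sinh_eq, abs_div, abs_two]
    nlinarith [Real.exp_pos (|z.re| / 2), Real.exp_pos (-(|z.re| / 2))]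
  have hpos : 0 < ‖Complex.sinh (z / 2)‖ := by linarith [Real.exp_pos (|z.re| / 2)]
  rw [norm_inv, Real.norm_of_nonneg (Real.exp_pos _).le, inv_le_iff_one_le_mul₀ hpos]
  calc (1 : ℝ) = Real.exp (|z.re| / 2) * Real.exp (-(1 / 2) * |z.re|) := by
        rw [← Real.exp_add]; ring_nf; simp
    _ ≤ 4 * ‖Complex.sinh (z / 2)‖ * Real.exp (-(1 / 2) * |z.re|) := by gcongr
    _ = _ := by ring

end SechKernel

section Poisson

open Complex Asymptotics
open scoped Topology Filter Real

variable {E : Type*} [NormedAddCommGroup E] [NormedSpace ℂ E]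

/-- The difference quotient `(φ z - φ 0) / sinh (z / 2)`, with the removable singularity at `0`
filled in by dividing the slopes at `0` of numerator and denominator. Shifting its line of
integration yields the Poisson formula for the strip `|Im z| ≤ π`. -/
noncomputable def sinhSlope (φ : ℂ → E) (z : ℂ) : E :=
  (dslope (fun z : ℂ => sinh (z / 2)) 0 z)⁻¹ • dslope φ 0 z

lemma sinhSlope_of_ne (φ : ℂ → E) {z : ℂ} (hz : z ≠ 0) :
    sinhSlope φ z = (sinh (z / 2))⁻¹ • (φ z - φ 0) := by
  rw [sinhSlope, dslope_of_ne _ hz, dslope_of_ne _ hz, slope_def_field, slope_def_module, zero_div,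
    sinh_zero, sub_zero, sub_zero, smul_smul, inv_div, div_mul_eq_mul_div,
    mul_inv_cancel₀ hz, one_div]

lemma im_preimage_Ioo_mem_nhds_zero : im ⁻¹' Ioo (-π) π ∈ 𝓝 (0 : ℂ) :=
  (isOpen_Ioo.preimage continuous_im).mem_nhds (by simp [Real.pi_pos])

lemma diffContOnCl_dslope_zero [CompleteSpace E] {φ : ℂ → E}
    (hφ : DiffContOnCl ℂ φ (im ⁻¹' Ioo (-π) π)) :
    DiffContOnCl ℂ (dslope φ 0) (im ⁻¹' Ioo (-π) π) :=
  ⟨(differentiableOn_dslope im_preimage_Ioo_mem_nhds_zero).2 hφ.differentiableOn,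
    (continuousOn_dslope (mem_of_superset im_preimage_Ioo_mem_nhds_zero subset_closure)).2
      ⟨hφ.continuousOn, hφ.differentiableAt (isOpen_Ioo.preimage continuous_im)
        (mem_of_mem_nhds im_preimage_Ioo_mem_nhds_zero)⟩⟩

lemma dslope_sinh_half_ne_zero {z : ℂ} (hz : |z.im| ≤ π) :
    dslope (fun z : ℂ => sinh (z / 2)) 0 z ≠ 0 := by
  rcases eq_or_ne z 0 with rfl | hz0
  · have hderiv : HasDerivAt (fun z : ℂ => sinh (z / 2)) (1 / 2) 0 := by
      simpa using ((hasDerivAt_id' (0 : ℂ)).div_const 2).csinh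
    rw [dslope_same, hderiv.deriv]
    norm_num
  · rw [dslope_of_ne _ hz0, slope_def_field, zero_div, sinh_zero, sub_zero, sub_zero]
    refine div_ne_zero (sinh_ne_zero_of_abs_im_lt_pi (div_ne_zero hz0 two_ne_zero) ?_) hz0
    rw [div_ofNat_im, abs_div, abs_two]
    linarith [Real.pi_pos]

lemma diffContOnCl_sinhSlope [CompleteSpace E] {φ : ℂ → E}
    (hφ : DiffContOnCl ℂ φ (im ⁻¹' Ioo (-π) π)) :
    DiffContOnCl ℂ (sinhSlope φ) (im ⁻¹' Ioo (-π) π) := by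
  have hsinh : Differentiable ℂ fun z : ℂ => sinh (z / 2) := by fun_prop
  refine ((diffContOnCl_dslope_zero hsinh.diffContOnCl).inv fun z hz => ?_).smul
    (diffContOnCl_dslope_zero hφ)
  rw [closure_preimage_im, closure_Ioo (by linarith [Real.pi_pos])] at hz
  exact dslope_sinh_half_ne_zero (abs_le.2 hz)

lemma isBigO_sinhSlope {φ : ℂ → E} {β : ℝ} (hβ : 0 ≤ β)
    (hO : φ =O[comap re (cocompact ℝ) ⊓ 𝓟 (im ⁻¹' Icc (-π) π)] fun z => Real.exp (β * |z.re|)) :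
    sinhSlope φ =O[comap re (cocompact ℝ) ⊓ 𝓟 (im ⁻¹' Icc (-π) π)]
      ((fun x => Real.exp (-(1 / 2 - β) * |x|)) ∘ re) := by
  have hconst : (fun _ : ℂ => φ 0) =O[comap re (cocompact ℝ) ⊓ 𝓟 (im ⁻¹' Icc (-π) π)]
      fun z => Real.exp (β * |z.re|) :=
    IsBigO.of_bound ‖φ 0‖ (.of_forall fun z => le_mul_of_one_le_right (norm_nonneg _) <| by
      rw [Real.norm_of_nonneg (Real.exp_pos _).le]
      exact Real.one_le_exp (by positivity))
  have hne : ∀ᶠ z in comap re (cocompact ℝ) ⊓ 𝓟 (im ⁻¹' Icc (-π) π), z ≠ 0 := by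
    have hre := (tendsto_norm_cocompact_atTop.comp (tendsto_comap (f := re))).eventually_gt_atTop 0
    exact (hre.filter_mono inf_le_left).mono fun z hz h0 => by simp [h0] at hz
  refine ((isBigO_inv_sinh_half.mono inf_le_left).smul (hO.sub hconst)).congr' ?_ ?_
  · exact hne.mono fun z hz => (sinhSlope_of_ne φ hz).symm
  · refine .of_forall fun z => ?_
    simp only [smul_eq_mul, ← Real.exp_add, Function.comp_apply]
    ring_nf

lemma sinh_half_add_pi_mul_I (x : ℝ) :
    sinh ((x + π * I) / 2) = I * (Real.cosh (x / 2) : ℂ) := by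
  rw [add_div, mul_div_right_comm, sinh_add, sinh_mul_I, cosh_mul_I, cos_pi_div_two,
    sin_pi_div_two]
  push_cast
  ring

lemma sinh_half_sub_pi_mul_I (x : ℝ) :
    sinh ((x + (-π : ℝ) * I) / 2) = -(I * (Real.cosh (x / 2) : ℂ)) := by
  rw [add_div, mul_div_right_comm, sinh_add, sinh_mul_I, cosh_mul_I, ofReal_neg, neg_div, cos_neg,
    sin_neg, cos_pi_div_two, sin_pi_div_two]
  push_cast
  ring

lemma inv_cosh_half_smul_add (φ : ℂ → E) (x : ℝ) :
    (Real.cosh (x / 2))⁻¹ • (φ (x + π * I) + φ (x + (-π : ℝ) * I)) =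
      I • (sinhSlope φ (x + π * I) - sinhSlope φ (x + (-π : ℝ) * I)) +
        (Real.cosh (x / 2))⁻¹ • (2 : ℝ) • φ 0 := by
  have hne {y : ℝ} (hy : y ≠ 0) : (x + y * I : ℂ) ≠ 0 := fun h =>
    hy (by simpa using congrArg im h)
  rw [sinhSlope_of_ne _ (hne Real.pi_ne_zero), sinhSlope_of_ne _ (hne (neg_ne_zero.2
    Real.pi_ne_zero)), sinh_half_add_pi_mul_I, sinh_half_sub_pi_mul_I, inv_neg, mul_inv, inv_I,
    two_smul, ← coe_smul, ofReal_inv, smul_sub, smul_smul, smul_smul]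
  have hI : I * (-I * (Real.cosh (x / 2) : ℂ)⁻¹) = (Real.cosh (x / 2) : ℂ)⁻¹ := by
    rw [← mul_assoc, mul_neg, I_mul_I, neg_neg, one_mul]
  rw [mul_neg, hI, ← coe_smul, ofReal_inv]
  module

theorem integral_inv_cosh_half_smul_add [CompleteSpace E] {φ : ℂ → E} {β : ℝ}
    (hφ : DiffContOnCl ℂ φ (im ⁻¹' Ioo (-π) π)) (hβ0 : 0 ≤ β) (hβ : β < 1 / 2)
    (hO : φ =O[comap re (cocompact ℝ) ⊓ 𝓟 (im ⁻¹' Icc (-π) π)] fun z => Real.exp (β * |z.re|)) :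
    Integrable (fun x : ℝ => (Real.cosh (x / 2))⁻¹ • (φ (x + π * I) + φ (x + (-π : ℝ) * I))) ∧
      ∫ x : ℝ, (Real.cosh (x / 2))⁻¹ • (φ (x + π * I) + φ (x + (-π : ℝ) * I)) =
        (4 * π) • φ 0 := by
  have hπ : -π < π := by linarith [Real.pi_pos]
  have hq := diffContOnCl_sinhSlope hφ
  have hqO := isBigO_sinhSlope hβ0 hO
  have hg := integrable_exp_neg_mul_abs (sub_pos.2 hβ)
  have hint {y : ℝ} (hy : y ∈ Icc (-π) π) :=
    integrable_ofReal_add_mul_I_of_isBigO hπ hq hqO hg hy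
  have hshift := integral_ofReal_add_mul_I_eq_of_isBigO hπ hq hqO hg
    (tendsto_exp_neg_mul_abs_cocompact (sub_pos.2 hβ))
  have hslope : Integrable fun x : ℝ =>
      I • (sinhSlope φ (x + π * I) - sinhSlope φ (x + (-π : ℝ) * I)) :=
    ((hint ⟨hπ.le, le_rfl⟩).sub (hint ⟨le_rfl, hπ.le⟩)).smul I
  have hconst := integrable_inv_cosh_half.smul_const ((2 : ℝ) • φ 0)
  simp_rw [inv_cosh_half_smul_add φ]
  refine ⟨hslope.add hconst, ?_⟩
  rw [integral_add hslope hconst, integral_smul, integral_sub (hint ⟨hπ.le, le_rfl⟩)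
    (hint ⟨le_rfl, hπ.le⟩), hshift, sub_self, smul_zero, zero_add, integral_smul_const,
    integral_inv_cosh_half, smul_smul]
  ring_nf

end Poisson

section StieltjesRepresentation

open Complex Asymptotics
open scoped ComplexConjugate Filter Real

variable {f : ℂ → ℂ} {a : ℝ}

lemma isBigO_exp_half_mul_comp_add
    (hO : f =O[𝓟 (im ⁻¹' Icc (-π) π)] fun z => Real.exp (-a * z.re)) (L : ℝ) :
    (fun z => cexp (z / 2) * f (z + L)) =O[𝓟 (im ⁻¹' Icc (-π) π)]
      fun z => Real.exp (|1 / 2 - a| * |z.re|) := by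
  obtain ⟨C, hC⟩ := isBigO_principal.1 hO
  refine isBigO_principal.2 ⟨C * Real.exp (-a * L), fun z hz => ?_⟩
  have hfz := hC (z + L) (by simpa using hz)
  rw [Real.norm_of_nonneg (Real.exp_pos _).le] at hfz ⊢
  have hC0 : 0 ≤ C := nonneg_of_mul_nonneg_left ((norm_nonneg _).trans hfz) (Real.exp_pos _)
  calc ‖cexp (z / 2) * f (z + L)‖ ≤ Real.exp (z.re / 2) * (C * Real.exp (-a * (z + L).re)) := by
        rw [norm_mul, norm_exp, div_ofNat_re]
        gcongr
    _ = C * Real.exp (-a * L) * Real.exp ((1 / 2 - a) * z.re) := by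
        rw [mul_left_comm, mul_assoc, ← Real.exp_add, ← Real.exp_add, add_re, ofReal_re]
        ring_nf
    _ ≤ C * Real.exp (-a * L) * Real.exp (|1 / 2 - a| * |z.re|) := by
        refine mul_le_mul_of_nonneg_left (Real.exp_le_exp.2 ?_) (by positivity)
        rw [← abs_mul]
        exact le_abs_self _

lemma inv_cosh_half_mul_exp_half (x L : ℝ) :
    (Real.cosh (x / 2))⁻¹ * Real.exp (x / 2) =
      2 * ((Real.exp L + Real.exp (x + L))⁻¹ * Real.exp (x + L)) := by
  have hx : Real.exp x = Real.exp (x / 2) * Real.exp (x / 2) := by rw [← Real.exp_add, add_halves]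
  rw [Real.cosh_eq, Real.exp_neg, Real.exp_add, hx]
  field_simp
  ring

lemma exp_half_mul_add_exp_half_mul_conj (x : ℝ) (w : ℂ) :
    cexp ((x + π * I) / 2) * w + cexp ((x + (-π : ℝ) * I) / 2) * conj w =
      ((-2 * Real.exp (x / 2) * w.im : ℝ) : ℂ) := by
  have hpos : cexp ((x + π * I) / 2) = Real.exp (x / 2) * I := by
    rw [add_div, mul_div_right_comm, Complex.exp_add, exp_pi_div_two_mul_I]
    push_cast
    rfl
  have hneg : cexp ((x + (-π : ℝ) * I) / 2) = -(Real.exp (x / 2) * I) := by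
    rw [add_div, mul_div_right_comm, Complex.exp_add, ofReal_neg,
      exp_neg_pi_div_two_mul_I]
    push_cast
    ring
  calc _ = Real.exp (x / 2) * I * (w - conj w) := by rw [hpos, hneg]; ring
    _ = 2 * Real.exp (x / 2) * w.im * (I * I) := by rw [sub_conj]; push_cast; ring
    _ = _ := by rw [I_mul_I]; push_cast; ring

/- The Poisson formula applied to `exp (z / 2) * f (z + L)`: on the lines `Im z = ±π` the
exponential contributes the factors `±i`, which single out the imaginary part of `f`. -/
theorem integral_inv_exp_add_exp_mul_im (hf : DiffContOnCl ℂ f (im ⁻¹' Ioo (-π) π))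
    (hconj : ∀ z, f (conj z) = conj (f z)) (ha : a ∈ Ioo 0 1)
    (hO : f =O[𝓟 (im ⁻¹' Icc (-π) π)] fun z => Real.exp (-a * z.re)) (L : ℝ) :
    Integrable (fun x : ℝ => (Real.exp L + Real.exp x)⁻¹ *
        (Real.exp x * -(f (x + π * I)).im)) ∧
      ∫ x : ℝ, (Real.exp L + Real.exp x)⁻¹ * (Real.exp x * -(f (x + π * I)).im) =
        π * (f L).re := by
  have hφ : DiffContOnCl ℂ (fun z => cexp (z / 2) * f (z + L)) (im ⁻¹' Ioo (-π) π) := by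
    have hexp : Differentiable ℂ fun z : ℂ => cexp (z / 2) := by fun_prop
    have hadd : Differentiable ℂ fun z : ℂ => z + L := by fun_prop
    exact hexp.diffContOnCl.smul (hf.comp hadd.diffContOnCl fun z hz => by simpa using hz)
  have hβ : |1 / 2 - a| < 1 / 2 := abs_lt.2 ⟨by linarith [ha.2], by linarith [ha.1]⟩
  have hpoisson := integral_inv_cosh_half_smul_add hφ (abs_nonneg _) hβ
    ((isBigO_exp_half_mul_comp_add hO L).mono inf_le_right)
  set g : ℝ → ℝ := fun x => (Real.exp L + Real.exp x)⁻¹ * (Real.exp x * -(f (x + π * I)).im)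
  have hboundary (x : ℝ) : (Real.cosh (x / 2))⁻¹ • (cexp ((x + π * I) / 2) * f (x + π * I + L) +
      cexp ((x + (-π : ℝ) * I) / 2) * f (x + (-π : ℝ) * I + L)) = ((4 * g (x + L) : ℝ) : ℂ) := by
    have hup : (x + π * I + L : ℂ) = (x + L : ℝ) + π * I := by push_cast; ring
    have hdown : (x + (-π : ℝ) * I + L : ℂ) = conj (((x + L : ℝ) : ℂ) + π * I) := by
      simp; ring
    rw [hup, hdown, hconj, exp_half_mul_add_exp_half_mul_conj, real_smul, ← ofReal_mul]
    congr 1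
    linear_combination -2 * (f ((x + L : ℝ) + π * I)).im * inv_cosh_half_mul_exp_half x L
  simp_rw [hboundary] at hpoisson
  obtain ⟨hint, heq⟩ := hpoisson
  rw [integral_complex_ofReal, integral_const_mul, integral_add_right_eq_self g, zero_div,
    Complex.exp_zero, one_mul, zero_add] at heq
  refine ⟨by simpa using (hint.re.const_mul (1 / 4)).comp_sub_right L, ?_⟩
  have hre := congrArg re heq
  rw [ofReal_re, smul_re, smul_eq_mul] at hre
  linarith

theorem completelyMonotoneOn_of_laplace_eq_re_comp_log (hf : DiffContOnCl ℂ f (im ⁻¹' Ioo (-π) π))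
    (hconj : ∀ z, f (conj z) = conj (f z)) (ha : a ∈ Ioo 0 1)
    (hO : f =O[𝓟 (im ⁻¹' Icc (-π) π)] fun z => Real.exp (-a * z.re))
    (him : ∀ x : ℝ, (f (x + π * I)).im ≤ 0) {κ : ℝ → ℝ} (hκ : ContinuousOn κ (Ioi 0))
    (hκi : ∀ p > 0, IntegrableOn (fun t => Real.exp (-p * t) * κ t) (Ioi 0))
    (hlap : ∀ p > 0, ∫ t in Ioi (0 : ℝ), Real.exp (-p * t) * κ t = (f (Real.log p)).re) :
    CompletelyMonotoneOn κ := by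
  have hπ : -π < π := by linarith [Real.pi_pos]
  have hfcont : Continuous fun x : ℝ => f (x + π * I) :=
    (continuousOn_im_preimage_Icc_of_diffContOnCl hπ hf).comp_continuous (by fun_prop)
      fun x => by simp [hπ.le]
  have himcont : Continuous fun x : ℝ => (f (x + π * I)).im := continuous_im.comp hfcont
  have hstieltjes {p : ℝ} (hp : 0 < p) :
      Integrable (fun x : ℝ => (p + Real.exp x)⁻¹ * (Real.exp x * -(f (x + π * I)).im)) ∧
        ∫ x : ℝ, (p + Real.exp x)⁻¹ * (Real.exp x * -(f (x + π * I)).im) =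
          π * (f (Real.log p)).re := by
    simpa only [Real.exp_log hp] using integral_inv_exp_add_exp_mul_im hf hconj ha hO (Real.log p)
  refine completelyMonotoneOn_of_laplace_eq_integral_inv_add_mul (X := Real.exp)
    (ν := volume) (w := fun x => π⁻¹ * (Real.exp x * -(f (x + π * I)).im)) (fun x => ?_)
    (continuous_const.mul (Real.continuous_exp.mul himcont.neg)).aemeasurable
    (fun x => (Real.exp_pos x).le) Real.measurable_exp.aemeasurable (fun p hp => ?_) hκ hκi
    fun p hp => ?_
  · have := neg_nonneg.2 (him x)
    positivity
  · simpa only [mul_left_comm] using (hstieltjes hp).1.const_mul π⁻¹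
  · simp_rw [mul_left_comm _ π⁻¹]
    rw [hlap p hp, integral_const_mul, (hstieltjes hp).2, inv_mul_cancel_left₀ Real.pi_ne_zero]

end StieltjesRepresentation

section ComplexMGF

open Complex ProbabilityTheory Asymptotics
open scoped ComplexConjugate Filter Real

variable {Ω : Type*} {mΩ : MeasurableSpace Ω} {m : Measure Ω} {X : Ω → ℝ}

lemma complexMGF_conj (z : ℂ) : complexMGF X m (conj z) = conj (complexMGF X m z) := by
  simp only [complexMGF, ← integral_conj, ← exp_conj, map_mul, conj_ofReal]

lemma integrable_cexp_mul_of_mem_Icc [IsFiniteMeasure m] {a b : ℝ} (hX : AEMeasurable X m)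
    (hXab : ∀ᵐ ω ∂m, X ω ∈ Icc a b) (z : ℂ) : Integrable (fun ω => cexp (z * X ω)) m :=
  integrable_cexp_mul_of_re_mem_integrableExpSet hX (integrable_exp_mul_of_mem_Icc hX hXab)

lemma differentiable_complexMGF_of_mem_Icc [IsFiniteMeasure m] {a b : ℝ} (hX : AEMeasurable X m)
    (hXab : ∀ᵐ ω ∂m, X ω ∈ Icc a b) : Differentiable ℂ (complexMGF X m) := fun _ =>
  (hasDerivAt_complexMGF (mem_interior_iff_mem_nhds.2 (univ_mem' fun _ =>
    integrable_exp_mul_of_mem_Icc hX hXab))).differentiableAt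

lemma im_complexMGF {z : ℂ} (hint : Integrable (fun ω => cexp (z * X ω)) m) :
    (complexMGF X m z).im = ∫ ω, Real.exp (z.re * X ω) * Real.sin (z.im * X ω) ∂m := by
  rw [complexMGF, ← RCLike.im_eq_complex_im, ← integral_im hint]
  simp [exp_im]

lemma re_exp_mul_complexMGF {z : ℂ} (w : ℂ) (hint : Integrable (fun ω => cexp (z * X ω)) m) :
    (cexp w * complexMGF X m z).re =
      ∫ ω, Real.exp (w.re + z.re * X ω) * Real.cos (w.im + z.im * X ω) ∂m := by
  rw [complexMGF, ← integral_const_mul, ← RCLike.re_eq_complex_re, ← integral_re (hint.const_mul _)]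
  simp [← Complex.exp_add, exp_re]

lemma sin_pi_mul_le_cos_mul_sub_half {α y : ℝ} (hα : α ∈ Icc 0 1) (hy : |y| ≤ π) :
    Real.sin (π * α) ≤ Real.cos (y * (α - 1 / 2)) := by
  have habs : |α - 1 / 2| ≤ 1 / 2 := abs_le.2 ⟨by linarith [hα.1], by linarith [hα.2]⟩
  rw [← Real.cos_sub_pi_div_two, show π * α - π / 2 = π * (α - 1 / 2) by ring, ← Real.cos_abs,
    ← Real.cos_abs (y * _), abs_mul, abs_mul, abs_of_pos Real.pi_pos]
  refine Real.cos_le_cos_of_nonneg_of_le_pi (by positivity) ?_ (by gcongr)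
  nlinarith [Real.pi_pos]

lemma im_complexMGF_add_pi_mul_I_le_norm [IsFiniteMeasure m] (hX : AEMeasurable X m)
    (hX01 : ∀ᵐ ω ∂m, X ω ∈ Icc 0 1) {z : ℂ} (hz : |z.im| ≤ π) :
    (complexMGF X m (z.re + π * I)).im ≤ ‖complexMGF X m z‖ := by
  have hint := integrable_cexp_mul_of_mem_Icc hX hX01
  calc (complexMGF X m (z.re + π * I)).im
      = ∫ ω, Real.exp (z.re * X ω) * Real.sin (π * X ω) ∂m := by simp [im_complexMGF (hint _)]
    _ ≤ ∫ ω, Real.exp (z.re * X ω) * Real.cos (z.im * (X ω - 1 / 2)) ∂m := by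
        refine integral_mono_ae
          (integrable_continuous_comp hX hX01
            (h := fun α => Real.exp (z.re * α) * Real.sin (π * α)) (by fun_prop))
          (integrable_continuous_comp hX hX01
            (h := fun α => Real.exp (z.re * α) * Real.cos (z.im * (α - 1 / 2))) (by fun_prop))
          (hX01.mono fun _ hω => ?_)
        exact mul_le_mul_of_nonneg_left (sin_pi_mul_le_cos_mul_sub_half hω hz) (Real.exp_pos _).le
    _ = (cexp (-(z.im / 2 : ℝ) * I) * complexMGF X m z).re := by
        rw [re_exp_mul_complexMGF _ (hint z)]
        simp [sub_eq_neg_add, mul_add, mul_neg, div_eq_mul_inv]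
    _ ≤ ‖complexMGF X m z‖ := by
        refine (re_le_norm _).trans_eq ?_
        rw [norm_mul, ← ofReal_neg, norm_exp_ofReal_mul_I, one_mul]

/- Jensen's inequality for `exp`, by the tangent line at the mean of `X` with respect to `k`. -/
lemma integral_mul_exp_mul_div_le {k : Ω → ℝ} (hk : 0 ≤ᵐ[m] k) (hk0 : 0 < ∫ ω, k ω ∂m)
    (hXk : Integrable (fun ω => X ω * k ω) m) {x : ℝ}
    (hexp : Integrable (fun ω => Real.exp (x * X ω) * k ω) m) :
    (∫ ω, k ω ∂m) * Real.exp (x * ((∫ ω, X ω * k ω ∂m) / ∫ ω, k ω ∂m)) ≤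
      ∫ ω, Real.exp (x * X ω) * k ω ∂m := by
  have hkint : Integrable k m := by
    by_contra h
    exact hk0.ne' (integral_undef h)
  set A := (∫ ω, X ω * k ω ∂m) / ∫ ω, k ω ∂m
  have htangent (ω : Ω) :
      Real.exp (x * A) * ((1 - x * A) * k ω + x * (X ω * k ω)) =
        Real.exp (x * A) * (x * (X ω - A) + 1) * k ω := by ring
  calc (∫ ω, k ω ∂m) * Real.exp (x * A)
      = ∫ ω, Real.exp (x * A) * ((1 - x * A) * k ω + x * (X ω * k ω)) ∂m := by
        rw [integral_const_mul, integral_add (hkint.const_mul _) (hXk.const_mul _),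
          integral_const_mul, integral_const_mul]
        have : ∫ ω, X ω * k ω ∂m = A * ∫ ω, k ω ∂m := (div_mul_cancel₀ _ hk0.ne').symm
        rw [this]
        ring
    _ ≤ ∫ ω, Real.exp (x * X ω) * k ω ∂m := by
        refine integral_mono_ae (((hkint.const_mul _).add (hXk.const_mul _)).const_mul _) hexp
          (hk.mono fun ω hω => ?_)
        simp only [htangent]
        refine mul_le_mul_of_nonneg_right ?_ hω
        calc Real.exp (x * A) * (x * (X ω - A) + 1)
            ≤ Real.exp (x * A) * Real.exp (x * (X ω - A)) := by
              gcongr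
              exact Real.add_one_le_exp _
          _ = Real.exp (x * X ω) := by
              rw [← Real.exp_add]
              ring_nf

lemma integral_comp_pos_of_pos_on_Ioo [IsFiniteMeasure m] {a b : ℝ} (hX : AEMeasurable X m)
    (hXab : ∀ᵐ ω ∂m, X ω ∈ Icc a b) (hpos : m (X ⁻¹' Ioo a b) ≠ 0) {h : ℝ → ℝ} (hh : Continuous h)
    (hh0 : ∀ t ∈ Icc a b, 0 ≤ h t) (hh1 : ∀ t ∈ Ioo a b, 0 < h t) : 0 < ∫ ω, h (X ω) ∂m := by
  rw [integral_pos_iff_support_of_nonneg_ae (hXab.mono fun ω hω => hh0 _ hω)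
    (integrable_continuous_comp hX hXab hh)]
  exact (pos_iff_ne_zero.2 hpos).trans_le (measure_mono fun ω hω => (hh1 _ hω).ne')

lemma sin_pi_mul_nonneg {α : ℝ} (hα : α ∈ Icc 0 1) : 0 ≤ Real.sin (π * α) :=
  Real.sin_nonneg_of_nonneg_of_le_pi (mul_nonneg Real.pi_pos.le hα.1)
    (mul_le_of_le_one_right Real.pi_pos.le hα.2)

lemma sin_pi_mul_pos {α : ℝ} (hα : α ∈ Ioo 0 1) : 0 < Real.sin (π * α) :=
  Real.sin_pos_of_pos_of_lt_pi (mul_pos Real.pi_pos hα.1)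
    (mul_lt_of_lt_one_right Real.pi_pos hα.2)

lemma exists_mul_exp_le_im_complexMGF [IsFiniteMeasure m] (hX : AEMeasurable X m)
    (hX01 : ∀ᵐ ω ∂m, X ω ∈ Icc 0 1) (hpos : m (X ⁻¹' Ioo 0 1) ≠ 0) :
    ∃ c > 0, ∃ a ∈ Ioo (0 : ℝ) 1, ∀ x : ℝ,
      c * Real.exp (a * x) ≤ (complexMGF X m (x + π * I)).im := by
  have hint {h : ℝ → ℝ} (hh : Continuous h) := integrable_continuous_comp hX hX01 hh
  have hc : 0 < ∫ ω, Real.sin (π * X ω) ∂m := integral_comp_pos_of_pos_on_Ioo hX hX01 hpos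
    (h := fun α => Real.sin (π * α)) (by fun_prop) (fun _ => sin_pi_mul_nonneg)
    fun _ => sin_pi_mul_pos
  have hleft : 0 < ∫ ω, X ω * Real.sin (π * X ω) ∂m :=
    integral_comp_pos_of_pos_on_Ioo hX hX01 hpos (h := fun α => α * Real.sin (π * α)) (by fun_prop)
      (fun α hα => mul_nonneg hα.1 (sin_pi_mul_nonneg hα)) fun α hα =>
        mul_pos hα.1 (sin_pi_mul_pos hα)
  have hright : 0 < ∫ ω, (1 - X ω) * Real.sin (π * X ω) ∂m :=
    integral_comp_pos_of_pos_on_Ioo hX hX01 hpos (h := fun α => (1 - α) * Real.sin (π * α))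
      (by fun_prop) (fun α hα => mul_nonneg (sub_nonneg.2 hα.2) (sin_pi_mul_nonneg hα))
      fun α hα => mul_pos (sub_pos.2 hα.2) (sin_pi_mul_pos hα)
  have hXsin : Integrable (fun ω => X ω * Real.sin (π * X ω)) m :=
    hint (h := fun α => α * Real.sin (π * α)) (by fun_prop)
  simp_rw [sub_mul, one_mul] at hright
  rw [integral_sub (hint (h := fun α => Real.sin (π * α)) (by fun_prop)) hXsin, sub_pos] at hright
  refine ⟨_, hc, _, ⟨div_pos hleft hc, (div_lt_one hc).2 hright⟩, fun x => ?_⟩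
  rw [mul_comm _ x, im_complexMGF (integrable_cexp_mul_of_mem_Icc hX hX01 _)]
  simpa using integral_mul_exp_mul_div_le (hX01.mono fun _ => sin_pi_mul_nonneg) hc hXsin (x := x)
    (hint (h := fun α => Real.exp (x * α) * Real.sin (π * α)) (by fun_prop))

theorem completelyMonotoneOn_of_laplace_eq_inv_mgf_log [IsFiniteMeasure m] (hX : AEMeasurable X m)
    (hX01 : ∀ᵐ ω ∂m, X ω ∈ Icc 0 1) (hpos : m (X ⁻¹' Ioo 0 1) ≠ 0)
    {κ : ℝ → ℝ} (hκ : ContinuousOn κ (Ioi 0))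
    (hκi : ∀ p > 0, IntegrableOn (fun t => Real.exp (-p * t) * κ t) (Ioi 0))
    (hlap : ∀ p > 0, ∫ t in Ioi (0 : ℝ), Real.exp (-p * t) * κ t = (mgf X m (Real.log p))⁻¹) :
    CompletelyMonotoneOn κ := by
  obtain ⟨c, hc, a, ha, hlower⟩ := exists_mul_exp_le_im_complexMGF hX hX01 hpos
  have hnorm {z : ℂ} (hz : z ∈ im ⁻¹' Icc (-π) π) :
      c * Real.exp (a * z.re) ≤ ‖complexMGF X m z‖ :=
    (hlower z.re).trans (im_complexMGF_add_pi_mul_I_le_norm hX hX01 (abs_le.2 hz))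
  have hne {z : ℂ} (hz : z ∈ im ⁻¹' Icc (-π) π) : complexMGF X m z ≠ 0 :=
    norm_pos_iff.1 ((by positivity : 0 < c * Real.exp (a * z.re)).trans_le (hnorm hz))
  refine completelyMonotoneOn_of_laplace_eq_re_comp_log (f := fun z => (complexMGF X m z)⁻¹) ?_
    (fun z => by rw [complexMGF_conj, map_inv₀]) ha ?_ (fun x => ?_) hκ hκi fun p hp => ?_
  · refine (differentiable_complexMGF_of_mem_Icc hX hX01).diffContOnCl.inv fun _ hz => hne ?_
    rwa [closure_preimage_im, closure_Ioo (by linarith [Real.pi_pos])] at hz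
  · refine isBigO_principal.2 ⟨c⁻¹, fun z hz => ?_⟩
    rw [norm_inv, Real.norm_of_nonneg (Real.exp_pos _).le, neg_mul, Real.exp_neg, ← mul_inv]
    exact inv_anti₀ (by positivity) (hnorm hz)
  · rw [inv_im]
    exact div_nonpos_of_nonpos_of_nonneg
      (neg_nonpos.2 ((by positivity : 0 ≤ c * Real.exp (a * x)).trans (hlower x))) (normSq_nonneg _)
  · rw [hlap p hp, complexMGF_ofReal, ← ofReal_inv, ofReal_re]

end ComplexMGF

section DistributedOrder

open ProbabilityTheory

variable {μ : ℝ → ℝ}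

lemma mul_Kreal_eq_mgf_log (hμ : AEMeasurable μ (volume.restrict (Ioc 0 1)))
    (hnn : ∀ᵐ α ∂volume.restrict (Ioc 0 1), 0 ≤ μ α) {p : ℝ} (hp : 0 < p) :
    p * Kreal μ p =
      mgf id ((volume.restrict (Ioc 0 1)).withDensity fun α => ENNReal.ofReal (μ α))
        (Real.log p) := by
  rw [Kreal, intervalIntegral.integral_of_le zero_le_one, ← integral_const_mul, mgf,
    integral_withDensity_eq_integral_toReal_smul₀ hμ.ennreal_ofReal
      (.of_forall fun _ => ENNReal.ofReal_lt_top)]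
  refine integral_congr_ae (hnn.mono fun α hα => ?_)
  simp only [ENNReal.toReal_ofReal hα, smul_eq_mul, id]
  rw [mul_comm (μ α), Real.exp_mul, Real.exp_log hp, ← mul_assoc, Real.rpow_sub_one hp.ne',
    mul_div_cancel₀ _ hp.ne']

lemma integrableOn_Ioc_of_intervalIntegral_ne_zero {a b : ℝ} (hab : a ≤ b)
    (h : ∫ x in a..b, μ x ≠ 0) : IntegrableOn μ (Ioc a b) :=
  (intervalIntegrable_iff_integrableOn_Ioc_of_le hab).1
    (intervalIntegral.intervalIntegrable_of_integral_ne_zero h)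

lemma withDensity_ofReal_Ioo_ne_zero {a b : ℝ} (hab : a ≤ b)
    (hnn : ∀ᵐ x ∂volume.restrict (Ioc a b), 0 ≤ μ x) (hpos : 0 < ∫ x in a..b, μ x) :
    (volume.restrict (Ioc a b)).withDensity (fun x => ENNReal.ofReal (μ x)) (Ioo a b) ≠ 0 := by
  have hint := integrableOn_Ioc_of_intervalIntegral_ne_zero hab hpos.ne'
  rw [withDensity_apply _ measurableSet_Ioo, Measure.restrict_restrict measurableSet_Ioo,
    inter_eq_left.2 Ioo_subset_Ioc_self, ← Measure.restrict_congr_set Ioo_ae_eq_Ioc.symm,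
    ← ofReal_integral_eq_lintegral_ofReal hint hnn, ← intervalIntegral.integral_of_le hab]
  exact (ENNReal.ofReal_pos.2 hpos).ne'

end DistributedOrder

theorem distributed_order_integral_kernel_completely_monotone_general {μ κ : ℝ → ℝ}
    (hnn : ∀ᵐ α ∂volume.restrict (Ioc 0 1), 0 ≤ μ α) (hpos : 0 < ∫ α in (0 : ℝ)..1, μ α)
    (hκ : ContinuousOn κ (Ioi 0))
    (hlap : ∀ p : ℝ, 0 < p →
      IntegrableOn (fun t : ℝ => Real.exp (-p * t) * κ t) (Ioi 0) ∧
        ∫ t in Ioi (0 : ℝ), Real.exp (-p * t) * κ t = 1 / (p * Kreal μ p)) :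
    CompletelyMonotoneOn κ := by
  have hint := integrableOn_Ioc_of_intervalIntegral_ne_zero zero_le_one hpos.ne'
  set m := (volume.restrict (Ioc (0 : ℝ) 1)).withDensity fun α => ENNReal.ofReal (μ α)
  have : IsFiniteMeasure m := isFiniteMeasure_withDensity_ofReal hint.2
  have hsupp : ∀ᵐ α ∂m, id α ∈ Icc (0 : ℝ) 1 :=
    (withDensity_absolutelyContinuous _ _).ae_le
      ((ae_restrict_mem measurableSet_Ioc).mono fun α hα => Ioc_subset_Icc_self hα)
  refine completelyMonotoneOn_of_laplace_eq_inv_mgf_log aemeasurable_id hsupp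
    (withDensity_ofReal_Ioo_ne_zero zero_le_one hnn hpos) hκ (fun p hp => (hlap p hp).1)
    fun p hp => ?_
  rw [(hlap p hp).2, mul_Kreal_eq_mgf_log hint.aemeasurable hnn hp, one_div]

theorem distributed_order_integral_kernel_completely_monotone (μ : ℝ → ℝ)
    (hc : ContinuousOn μ (Set.Icc 0 1))
    (hnn : ∀ α ∈ Set.Icc (0:ℝ) 1, 0 ≤ μ α)
    (hne : ∃ α ∈ Set.Icc (0:ℝ) 1, μ α ≠ 0)
    (hC3 : ContDiffOn ℝ 3 μ (Set.Icc 0 1))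
    (h1 : μ 1 ≠ 0)
    (h0 : μ 0 ≠ 0 ∨ ∃ a ν : ℝ, 0 < a ∧ 0 < ν ∧
      Tendsto (fun α : ℝ => μ α / (a * α ^ ν)) (nhdsWithin 0 (Set.Ioi 0)) (nhds 1))
    (κ : ℝ → ℝ) (hκc : ContinuousOn κ (Set.Ioi 0))
    (hκloc : LocallyIntegrableOn κ (Set.Ioi 0))
    (hlap : ∀ p : ℝ, 0 < p →
      IntegrableOn (fun t : ℝ => Real.exp (-p * t) * κ t) (Set.Ioi 0) ∧
      ∫ t in Set.Ioi (0:ℝ), Real.exp (-p * t) * κ t = 1 / (p * Kreal μ p)) :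
    CompletelyMonotoneOn κ := by
  obtain ⟨α, hα, hα0⟩ := hne
  exact distributed_order_integral_kernel_completely_monotone_general
    ((ae_restrict_mem measurableSet_Ioc).mono fun β hβ => hnn β (Ioc_subset_Icc_self hβ))
    (intervalIntegral.integral_pos one_pos hc (fun β hβ => hnn β (Ioc_subset_Icc_self hβ))
      ⟨α, hα, (hnn α hα).lt_of_ne' hα0⟩) hκc hlap
end

section
/- Let μ be twice continuously differentiable on [0,1] with μ(α) = α^ν μ₁(α), where ν ≥ 0, μ₁ is continuous and μ₁(α) ≥ ρ for all α ∈ [0,1] for some ρ > 0. Let Z be the fundamental solution of the one-dimensional ultraslow diffusion equation, characterized by its Laplace transform in t. Then for every T > 0 and every ε ∈ (0,1) there exist constants C > 0, a > 0 such that: (1) |Z(t,x)| ≤ C t^{−1/2} whenever 0 < t ≤ T and |x| ≤ ε; and (2) |Z(t,x)| ≤ C e^{−a|x|} whenever 0 < t ≤ T and |x| ≥ ε^{−1}. -/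
open MeasureTheory Filter Set

/-!
Write `m` for the measure with density `μ`, so that `p K(p) = ∫ p^α dm(α)`, and put
`λ(p) = √(p K(p))`. Real `p` determine the Laplace transform of `Z(·, x)` on `Re p > 0`, by the
identity theorem: it is `λ(p) / (2p) * exp (-|x| λ(p))`. There is no cancellation in
`∫ p^α dm(α)`, because a rotation by `-arg p / 2` moves all the `p^α` into a sector of half-angle at
most `π / 4`. Hence `p K(p)` is comparable to `∫ |p|^α dm(α)`, and `|λ'| ≤ |λ| / |p|`.

The derivative of the transform is then `O(|p|^{-3/2})`, uniformly in `x`, and it is integrable on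
vertical lines, unlike the transform itself. Laplace inversion for `t Z(t, x)` on the line
`Re p = 1 / t` gives the bound `t^{-1/2}`. Away from `x = 0`, a positive mass of orders `α ≥ δ > 0`
gives `Re λ(p) ≥ c |p|^{δ/2}` on the line `Re p = 1`; the factor `exp (-|x| λ(p))` then pays both
for integrability and for exponential decay in `x`.
-/

section LaplaceTransform

open scoped FourierTransform Real Topology

variable {E : Type*} [NormedAddCommGroup E] [NormedSpace ℂ E] {f : ℝ → E} {p q : ℂ}

/-- Absolute convergence at `p` of the Laplace integral of `f` over the half-line. -/
def LaplaceConvergent (f : ℝ → E) (p : ℂ) : Prop :=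
  IntegrableOn (fun t : ℝ => Complex.exp (-p * t) • f t) (Ioi 0)

/-- The Laplace transform of `f`, as a Bochner integral: its value is `0` at the points where `f`
is not `LaplaceConvergent`. -/
noncomputable def laplaceTransform (f : ℝ → E) (p : ℂ) : E :=
  ∫ t in Ioi (0 : ℝ), Complex.exp (-p * t) • f t

lemma norm_exp_neg_mul_smul (p : ℂ) (t : ℝ) (v : E) :
    ‖Complex.exp (-p * t) • v‖ = Real.exp (-p.re * t) * ‖v‖ := by
  simp [norm_smul, Complex.norm_exp]

lemma LaplaceConvergent.aestronglyMeasurable (hf : LaplaceConvergent f p) :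
    AEStronglyMeasurable f (volume.restrict (Ioi (0 : ℝ))) := by
  have hexp : Continuous fun t : ℝ => Complex.exp (p * t) := by fun_prop
  refine (hexp.aestronglyMeasurable.smul
    (Integrable.aestronglyMeasurable hf)).congr (.of_forall fun t => ?_)
  simp [smul_smul, ← Complex.exp_add]

theorem LaplaceConvergent.mono (hf : LaplaceConvergent f p) (hpq : p.re ≤ q.re) :
    LaplaceConvergent f q := by
  have hexp : Continuous fun t : ℝ => Complex.exp (-q * t) := by fun_prop
  refine Integrable.mono hf (hexp.aestronglyMeasurable.smul hf.aestronglyMeasurable) ?_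
  filter_upwards [ae_restrict_mem measurableSet_Ioi] with t (ht : 0 < t)
  rw [norm_exp_neg_mul_smul, norm_exp_neg_mul_smul]
  gcongr

lemma mul_exp_neg_mul_le {σ τ t : ℝ} (hστ : σ < τ) :
    t * Real.exp (-τ * t) ≤ (τ - σ)⁻¹ * Real.exp (-σ * t) := by
  have hlin : (τ - σ) * t ≤ Real.exp ((τ - σ) * t) := by
    linarith [Real.add_one_le_exp ((τ - σ) * t)]
  rw [inv_mul_eq_div, le_div_iff₀ (sub_pos.2 hστ)]
  calc t * Real.exp (-τ * t) * (τ - σ) = (τ - σ) * t * Real.exp (-τ * t) := by ring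
    _ ≤ Real.exp ((τ - σ) * t) * Real.exp (-τ * t) := by gcongr
    _ = Real.exp (-σ * t) := by rw [← Real.exp_add]; ring_nf

theorem hasDerivAt_laplaceTransform (hf : LaplaceConvergent f p) (hpq : p.re < q.re) :
    LaplaceConvergent (fun t => (t : ℂ) • f t) q ∧
      HasDerivAt (laplaceTransform f) (-laplaceTransform (fun t => (t : ℂ) • f t) q) q := by
  set τ := (p.re + q.re) / 2 with hτ
  have hpτ : p.re < τ := by linarith
  have hmeas := hf.aestronglyMeasurable
  have hexp (z : ℂ) : Continuous fun t : ℝ => Complex.exp (-z * t) := by fun_prop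
  have hhalf : {z : ℂ | τ < z.re} ∈ 𝓝 q :=
    (isOpen_lt continuous_const Complex.continuous_re).mem_nhds
      (by simp only [mem_ofPred]; linarith)
  have hbound : ∀ᵐ t : ℝ ∂volume.restrict (Ioi 0), ∀ z ∈ {z : ℂ | τ < z.re},
      ‖-(Complex.exp (-z * t) • (t : ℂ) • f t)‖ ≤
        (τ - p.re)⁻¹ * ‖Complex.exp (-p * t) • f t‖ := by
    filter_upwards [ae_restrict_mem measurableSet_Ioi] with t (ht : 0 < t) z (hz : τ < z.re)
    rw [norm_neg, norm_exp_neg_mul_smul, norm_exp_neg_mul_smul, norm_smul, Complex.norm_real,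
      Real.norm_of_nonneg ht.le]
    calc Real.exp (-z.re * t) * (t * ‖f t‖)
        ≤ Real.exp (-τ * t) * (t * ‖f t‖) := by gcongr
      _ = t * Real.exp (-τ * t) * ‖f t‖ := by ring
      _ ≤ (τ - p.re)⁻¹ * Real.exp (-p.re * t) * ‖f t‖ :=
        mul_le_mul_of_nonneg_right (mul_exp_neg_mul_le hpτ) (norm_nonneg _)
      _ = _ := by ring
  have hpointwise (t : ℝ) (z : ℂ) : HasDerivAt (fun z : ℂ => Complex.exp (-z * t) • f t)
      (-(Complex.exp (-z * t) • (t : ℂ) • f t)) z := by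
    have hlin : HasDerivAt (fun z : ℂ => -z * (t : ℂ)) (-t) z := by
      simpa using (hasDerivAt_neg z).mul_const (t : ℂ)
    simpa only [mul_neg, neg_smul, mul_smul] using hlin.cexp.smul_const (f t)
  obtain ⟨hint, hderiv⟩ := hasDerivAt_integral_of_dominated_loc_of_deriv_le
    (F := fun z (t : ℝ) => Complex.exp (-z * t) • f t) hhalf
    (.of_forall fun z => (hexp z).aestronglyMeasurable.smul hmeas) (hf.mono hpq.le)
    ((hexp q).aestronglyMeasurable.smul
      (Complex.continuous_ofReal.aestronglyMeasurable.smul hmeas)).neg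
    hbound ((Integrable.norm hf).const_mul _) (.of_forall fun t z _ => hpointwise t z)
  refine ⟨hint.neg.congr (.of_forall fun t => neg_neg _), ?_⟩
  rwa [integral_neg] at hderiv

lemma fourier_indicator_exp_neg_mul_smul (f : ℝ → E) (c w : ℝ) :
    𝓕 ((Ioi (0 : ℝ)).indicator fun t => Complex.exp (-c * t) • f t) w =
      laplaceTransform f (c + 2 * π * w * Complex.I) := by
  rw [Real.fourier_real_eq_integral_exp_smul, laplaceTransform, ← integral_indicator
    measurableSet_Ioi]
  congr with t
  by_cases ht : t ∈ Ioi (0 : ℝ)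
  · simp only [indicator_of_mem ht, smul_smul, ← Complex.exp_add]
    congr 2
    push_cast
    ring
  · simp only [indicator_of_notMem ht, smul_zero]

theorem LaplaceConvergent.continuous_verticalLine {c : ℝ} (hf : LaplaceConvergent f c) :
    Continuous fun w : ℝ => laplaceTransform f (c + 2 * π * w * Complex.I) := by
  simp_rw [← fourier_indicator_exp_neg_mul_smul f c]
  exact VectorFourier.fourierIntegral_continuous Real.continuous_fourierChar
    (L := innerₗ ℝ) continuous_inner ((integrable_indicator_iff measurableSet_Ioi).2 hf)

variable [CompleteSpace E]

theorem norm_le_exp_mul_integral_norm_laplaceTransform {c t : ℝ} (hf : LaplaceConvergent f c)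
    (hint : Integrable fun w : ℝ => laplaceTransform f (c + 2 * π * w * Complex.I))
    (ht : 0 < t) (hft : ContinuousAt f t) :
    ‖f t‖ ≤ Real.exp (c * t) * ∫ w : ℝ, ‖laplaceTransform f (c + 2 * π * w * Complex.I)‖ := by
  set h := (Ioi (0 : ℝ)).indicator fun t => Complex.exp (-c * t) • f t with hh
  have hfourier : 𝓕 h = fun w : ℝ => laplaceTransform f (c + 2 * π * w * Complex.I) :=
    funext (fourier_indicator_exp_neg_mul_smul f c)
  have hcont : ContinuousAt h t := by
    have hexp : ContinuousAt (fun t : ℝ => Complex.exp (-c * t)) t := by fun_prop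
    exact (hexp.smul hft).congr
      ((eqOn_indicator (s := Ioi (0 : ℝ))).symm.eventuallyEq_of_mem (Ioi_mem_nhds ht))
  have hinv : 𝓕⁻ (𝓕 h) t = h t :=
    Integrable.fourierInv_fourier_eq ((integrable_indicator_iff measurableSet_Ioi).2 hf)
      (by rwa [hfourier]) hcont
  have hnorm : Real.exp (-c * t) * ‖f t‖
      ≤ ∫ w : ℝ, ‖laplaceTransform f (c + 2 * π * w * Complex.I)‖ := by
    have hht : ‖h t‖ = Real.exp (-c * t) * ‖f t‖ := by
      rw [hh, indicator_of_mem (mem_Ioi.2 ht), norm_exp_neg_mul_smul, Complex.ofReal_re]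
    rw [← hht, ← hinv, Real.fourierInv_eq', hfourier]
    refine (norm_integral_le_integral_norm _).trans_eq (integral_congr_ae (.of_forall fun w => ?_))
    simp only [norm_smul, Complex.norm_exp_ofReal_mul_I, one_mul]
  calc ‖f t‖ = Real.exp (c * t) * (Real.exp (-c * t) * ‖f t‖) := by
        rw [← mul_assoc, ← Real.exp_add]; simp
    _ ≤ _ := by gcongr

lemma norm_verticalLine_rpow {c : ℝ} (hc : 0 < c) (s w : ℝ) :
    ‖(c + 2 * π * w * Complex.I : ℂ)‖ ^ (-s) =
      c ^ (-s) * (1 + ‖2 * π / c * w‖ ^ 2) ^ (-s / 2) := by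
  have hsq : ‖(c + 2 * π * w * Complex.I : ℂ)‖ = c * (1 + ‖2 * π / c * w‖ ^ 2) ^ (1 / 2 : ℝ) := by
    have := Complex.norm_add_mul_I c (2 * π * w)
    push_cast at this
    rw [this, Real.norm_eq_abs, sq_abs, ← Real.sqrt_eq_rpow, Real.sqrt_eq_iff_mul_self_eq
      (by positivity) (by positivity), mul_mul_mul_comm, Real.mul_self_sqrt (by positivity)]
    field_simp
  rw [hsq, Real.mul_rpow hc.le (by positivity), ← Real.rpow_mul (by positivity)]
  ring_nf

/-- The constant `(2π)⁻¹ ∫ (1 + u²)^{-s/2} du` of the inversion estimate for a Laplace transform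
of size `|p|^{-s}` on a vertical line. -/
noncomputable def laplaceInversionConst (s : ℝ) : ℝ :=
  (2 * π)⁻¹ * ∫ u : ℝ, (1 + ‖u‖ ^ 2) ^ (-s / 2)

theorem norm_le_of_norm_laplaceTransform_le_rpow {B c s t : ℝ} (hc : 0 < c) (hs : 1 < s)
    (hf : LaplaceConvergent f c)
    (hB : ∀ p : ℂ, p.re = c → ‖laplaceTransform f p‖ ≤ B * ‖p‖ ^ (-s))
    (ht : 0 < t) (hft : ContinuousAt f t) :
    ‖f t‖ ≤ laplaceInversionConst s * B * c ^ (1 - s) * Real.exp (c * t) := by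
  have hbound (w : ℝ) : ‖laplaceTransform f (c + 2 * π * w * Complex.I)‖
      ≤ B * (c ^ (-s) * (1 + ‖2 * π / c * w‖ ^ 2) ^ (-s / 2)) :=
    norm_verticalLine_rpow hc s w ▸ hB _ (by simp)
  have hdom : Integrable fun w : ℝ => B * (c ^ (-s) * (1 + ‖2 * π / c * w‖ ^ 2) ^ (-s / 2)) :=
    (((integrable_rpow_neg_one_add_norm_sq (by simpa using hs)).comp_mul_left'
      (by positivity)).const_mul _).const_mul _
  have hint := hdom.mono' hf.continuous_verticalLine.aestronglyMeasurable (.of_forall hbound)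
  calc ‖f t‖ ≤ Real.exp (c * t) * ∫ w : ℝ, ‖laplaceTransform f (c + 2 * π * w * Complex.I)‖ :=
        norm_le_exp_mul_integral_norm_laplaceTransform hf hint ht hft
    _ ≤ Real.exp (c * t) * ∫ w : ℝ, B * (c ^ (-s) * (1 + ‖2 * π / c * w‖ ^ 2) ^ (-s / 2)) :=
        mul_le_mul_of_nonneg_left (integral_mono hint.norm hdom hbound) (Real.exp_pos _).le
    _ = laplaceInversionConst s * B * c ^ (1 - s) * Real.exp (c * t) := by
        rw [integral_const_mul, integral_const_mul,
          Measure.integral_comp_mul_left (fun u : ℝ => (1 + ‖u‖ ^ 2) ^ (-s / 2)),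
          abs_of_pos (by positivity), smul_eq_mul, laplaceInversionConst, sub_eq_neg_add,
          Real.rpow_add_one hc.ne', inv_div, div_eq_mul_inv]
        ring

-- Inversion is applied to `t ↦ t f(t)`, whose transform is `-(L f)'`, on the line `Re p = 1 / t`.
theorem norm_le_rpow_of_norm_deriv_laplaceTransform_le {B T s t : ℝ} (hs : 1 < s)
    (hf : ∀ σ : ℝ, 0 < σ → LaplaceConvergent f σ)
    (hB : ∀ p : ℂ, T⁻¹ ≤ p.re → ‖deriv (laplaceTransform f) p‖ ≤ B * ‖p‖ ^ (-s))
    (ht : 0 < t) (htT : t ≤ T) (hft : ContinuousAt f t) :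
    ‖f t‖ ≤ laplaceInversionConst s * B * Real.exp 1 * t ^ (s - 2) := by
  have hderiv (p : ℂ) (hp : 0 < p.re) := hasDerivAt_laplaceTransform (q := p)
    (hf (p.re / 2) (half_pos hp)) (by simpa using hp)
  have hline (p : ℂ) (hp : p.re = t⁻¹) :
      ‖laplaceTransform (fun t => (t : ℂ) • f t) p‖ ≤ B * ‖p‖ ^ (-s) := by
    rw [← norm_neg, ← (hderiv p (hp ▸ inv_pos.2 ht)).2.deriv]
    exact hB p (hp ▸ inv_anti₀ ht htT)
  have hbound := norm_le_of_norm_laplaceTransform_le_rpow (inv_pos.2 ht) hs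
    (hderiv (t⁻¹ : ℝ) (by simpa using ht)).1 hline ht
    (Complex.continuous_ofReal.continuousAt.smul hft)
  rw [norm_smul, Complex.norm_real, Real.norm_of_nonneg ht.le, inv_mul_cancel₀ ht.ne',
    Real.inv_rpow ht.le, ← Real.rpow_neg ht.le, neg_sub, mul_comm t, ← le_div_iff₀ ht] at hbound
  have hpow : t ^ (s - 2) = t ^ (s - 1) / t := by rw [← Real.rpow_sub_one ht.ne']; ring_nf
  exact hbound.trans_eq (by rw [hpow]; ring)

theorem eqOn_re_pos_of_eq_ofReal {g h : ℂ → E} (hg : DifferentiableOn ℂ g {p | 0 < p.re})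
    (hh : DifferentiableOn ℂ h {p | 0 < p.re}) (hgh : ∀ r : ℝ, 0 < r → g r = h r) :
    EqOn g h {p | 0 < p.re} := by
  have hopen : IsOpen {p : ℂ | 0 < p.re} := isOpen_lt continuous_const Complex.continuous_re
  refine (hg.analyticOnNhd hopen).eqOn_of_preconnected_of_frequently_eq (hh.analyticOnNhd hopen)
    (convex_halfSpace_re_gt 0).isPreconnected (z₀ := 1) (by simp) ?_
  have hcoe : Tendsto ((↑) : ℝ → ℂ) (𝓝[≠] 1) (𝓝[≠] 1) := by
    refine tendsto_nhdsWithin_iff.2 ⟨?_, eventually_mem_nhdsWithin.mono fun r (hr : r ≠ 1) => ?_⟩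
    · exact (Complex.continuous_ofReal.tendsto' 1 1 Complex.ofReal_one).mono_left nhdsWithin_le_nhds
    · exact mem_compl_singleton_iff.2 (by exact_mod_cast hr)
  refine hcoe.frequently (Eventually.frequently ?_)
  filter_upwards [nhdsWithin_le_nhds (Ioi_mem_nhds one_pos)] with r hr using hgh r hr

end LaplaceTransform

section OrderSymbol

open scoped Topology

variable {m : Measure unitInterval} {p : ℂ}

/-- The symbol `∫ p^α dm(α)` of the distributed-order derivative whose orders are distributed
according to the measure `m` on `[0, 1]`. For `m` of density `μ` it is `p K(p)`. -/
noncomputable def orderSymbol (m : Measure unitInterval) (p : ℂ) : ℂ :=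
  ∫ α : unitInterval, p ^ ((α : ℝ) : ℂ) ∂m

/-- The symbol `orderSymbol m` on the positive half-line, as a real-valued function. -/
noncomputable def realOrderSymbol (m : Measure unitInterval) (r : ℝ) : ℝ :=
  ∫ α : unitInterval, r ^ (α : ℝ) ∂m

lemma orderSymbol_ofReal {r : ℝ} (hr : 0 ≤ r) : orderSymbol m r = realOrderSymbol m r := by
  simp only [orderSymbol, realOrderSymbol, ← Complex.ofReal_cpow hr]
  exact integral_ofReal

lemma norm_orderSymbol_le (p : ℂ) : ‖orderSymbol m p‖ ≤ realOrderSymbol m ‖p‖ :=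
  (norm_integral_le_integral_norm _).trans_eq <| by
    simp only [Complex.norm_cpow_real, realOrderSymbol]

variable [IsFiniteMeasure m]

lemma integrable_unitInterval_of_continuous {E : Type*} [NormedAddCommGroup E]
    {f : unitInterval → E} (hf : Continuous f) : Integrable f m :=
  hf.integrable_of_hasCompactSupport (.of_compactSpace f)

lemma integrable_rpow_unitInterval {r : ℝ} (hr : 0 < r) :
    Integrable (fun α : unitInterval => r ^ (α : ℝ)) m :=
  integrable_unitInterval_of_continuous (by fun_prop (disch := positivity))

lemma integrable_cpow_unitInterval (hp : p ≠ 0) :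
    Integrable (fun α : unitInterval => p ^ ((α : ℝ) : ℂ)) m :=
  integrable_unitInterval_of_continuous <|
    (Complex.continuous_ofReal.comp continuous_subtype_val).const_cpow (.inl hp)

lemma realOrderSymbol_le_mul {r T : ℝ} (hT : 0 < T) (hr : T⁻¹ ≤ r) :
    realOrderSymbol m r ≤ m.real univ * max 1 T * r := by
  have hr₀ : 0 < r := (inv_pos.2 hT).trans_le hr
  have hTr : 1 ≤ T * r := (inv_le_iff_one_le_mul₀' hT).1 hr
  have hpow (α : unitInterval) : r ^ (α : ℝ) ≤ max 1 T * r := by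
    rcases le_total r 1 with h | h
    · exact (Real.rpow_le_one hr₀.le h α.2.1).trans (hTr.trans (by gcongr; exact le_max_right _ _))
    · calc r ^ (α : ℝ) ≤ r ^ (1 : ℝ) := Real.rpow_le_rpow_of_exponent_le h α.2.2
        _ = 1 * r := by rw [Real.rpow_one, one_mul]
        _ ≤ max 1 T * r := by gcongr; exact le_max_left _ _
  calc realOrderSymbol m r ≤ ∫ _, max 1 T * r ∂m :=
        integral_mono (integrable_rpow_unitInterval hr₀) (integrable_const _) hpow
    _ = m.real univ * max 1 T * r := by rw [integral_const, smul_eq_mul, mul_assoc]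

lemma rpow_mul_measure_Ici_le_realOrderSymbol {r : ℝ} (hr : 1 ≤ r) (δ : unitInterval) :
    r ^ (δ : ℝ) * m.real (Ici δ) ≤ realOrderSymbol m r :=
  calc r ^ (δ : ℝ) * m.real (Ici δ)
      ≤ r ^ (δ : ℝ) * m.real {α | r ^ (δ : ℝ) ≤ r ^ (α : ℝ)} := by
        gcongr ?_ * ?_
        exact measureReal_mono fun α (hα : δ ≤ α) => Real.rpow_le_rpow_of_exponent_le hr hα
    _ ≤ realOrderSymbol m r := mul_meas_ge_le_integral_of_nonneg
        (.of_forall fun α => by positivity) (integrable_rpow_unitInterval (one_pos.trans_le hr)) _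

lemma exists_measureReal_Ici_pos (hm : m (Ioi 0) ≠ 0) :
    ∃ δ : unitInterval, 0 < δ ∧ 0 < m.real (Ici δ) := by
  obtain ⟨δ, -, hδ, hlim⟩ := exists_seq_strictAnti_tendsto' (zero_lt_one' unitInterval)
  rw [← iUnion_Ici_eq_Ioi_of_lt_of_tendsto (fun n => (hδ n).1) hlim] at hm
  obtain ⟨n, hn⟩ := exists_measure_pos_of_not_measure_iUnion_null hm
  exact ⟨δ n, (hδ n).1, ENNReal.toReal_pos hn.ne' (measure_ne_top m _)⟩

lemma realOrderSymbol_pos [NeZero m] {r : ℝ} (hr : 0 < r) : 0 < realOrderSymbol m r := by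
  have hpos (α : unitInterval) : 0 < r ^ (α : ℝ) := by positivity
  refine (integral_pos_iff_support_of_nonneg (fun α => (hpos α).le)
    (integrable_rpow_unitInterval hr)).2 ?_
  rw [Function.support_eq_univ fun α => (hpos α).ne']
  exact Measure.measure_univ_pos.2 (NeZero.ne m)

theorem hasDerivAt_orderSymbol (hp : p ∈ Complex.slitPlane) :
    HasDerivAt (orderSymbol m)
      (∫ α : unitInterval, ((α : ℝ) : ℂ) * p ^ (((α : ℝ) : ℂ) - 1) ∂m) p := by
  have hp₀ : 0 < ‖p‖ := norm_pos_iff.2 (Complex.slitPlane_ne_zero hp)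
  have hnhds : {z : ℂ | z ∈ Complex.slitPlane ∧ ‖p‖ / 2 < ‖z‖} ∈ 𝓝 p :=
    inter_mem (Complex.isOpen_slitPlane.mem_nhds hp)
      ((isOpen_lt continuous_const continuous_norm).mem_nhds (half_lt_self hp₀))
  have hcoe : Continuous fun α : unitInterval => ((α : ℝ) : ℂ) := by fun_prop
  refine (hasDerivAt_integral_of_dominated_loc_of_deriv_le
    (F := fun z (α : unitInterval) => z ^ ((α : ℝ) : ℂ))
    (F' := fun z α => ((α : ℝ) : ℂ) * z ^ (((α : ℝ) : ℂ) - 1))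
    (bound := fun α : unitInterval => (‖p‖ / 2) ^ ((α : ℝ) - 1))
    hnhds ?_ (integrable_cpow_unitInterval (m := m) (Complex.slitPlane_ne_zero hp)) ?_ ?_ ?_ ?_).2
  · filter_upwards [hnhds] with z hz
    exact (integrable_cpow_unitInterval (m := m)
      (Complex.slitPlane_ne_zero hz.1)).aestronglyMeasurable
  · exact (hcoe.mul ((hcoe.sub continuous_const).const_cpow
      (.inl (Complex.slitPlane_ne_zero hp)))).aestronglyMeasurable
  · refine .of_forall fun α z hz => ?_
    have hα := α.2
    rw [norm_mul, Complex.norm_of_nonneg hα.1, ← Complex.ofReal_one, ← Complex.ofReal_sub,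
      Complex.norm_cpow_real]
    calc (α : ℝ) * ‖z‖ ^ ((α : ℝ) - 1) ≤ 1 * ‖z‖ ^ ((α : ℝ) - 1) := by gcongr; exact hα.2
      _ ≤ (‖p‖ / 2) ^ ((α : ℝ) - 1) := by
        rw [one_mul]
        exact Real.rpow_le_rpow_of_nonpos (half_pos hp₀) hz.2.le (sub_nonpos.2 hα.2)
  · exact integrable_unitInterval_of_continuous (m := m) (by fun_prop (disch := positivity))
  · exact .of_forall fun α z hz => by simpa using (hasDerivAt_id z).cpow_const hz.1

theorem norm_deriv_orderSymbol_le (hp : p ∈ Complex.slitPlane) :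
    ‖deriv (orderSymbol m) p‖ ≤ realOrderSymbol m ‖p‖ / ‖p‖ := by
  have hp₀ : 0 < ‖p‖ := norm_pos_iff.2 (Complex.slitPlane_ne_zero hp)
  rw [(hasDerivAt_orderSymbol hp).deriv, realOrderSymbol, ← integral_div]
  refine norm_integral_le_of_norm_le ((integrable_rpow_unitInterval hp₀).div_const _)
    (.of_forall fun α => ?_)
  rw [norm_mul, Complex.norm_of_nonneg α.2.1, ← Complex.ofReal_one, ← Complex.ofReal_sub,
    Complex.norm_cpow_real, Real.rpow_sub_one hp₀.ne']
  exact mul_le_of_le_one_left (by positivity) α.2.2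

lemma re_exp_mul_I_mul_cpow_ofReal (p : ℂ) (α β : ℝ) :
    (Complex.exp (β * Complex.I) * p ^ (α : ℂ)).re = ‖p‖ ^ α * Real.cos (α * p.arg + β) := by
  rw [Complex.mul_re, Complex.exp_ofReal_mul_I_re, Complex.exp_ofReal_mul_I_im,
    Complex.cpow_ofReal_re, Complex.cpow_ofReal_im, mul_comm p.arg, Real.cos_add]
  ring

/- Rotating by `-arg p / 2` brings every `p ^ α`, `α ∈ [0, 1]`, into the sector of half-angle
`|arg p| / 2` about the positive half-line, so that the integral undergoes no cancellation. -/
theorem cos_half_arg_mul_realOrderSymbol_le (hp : p ≠ 0) :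
    Real.cos (p.arg / 2) * realOrderSymbol m ‖p‖ ≤ ‖orderSymbol m p‖ := by
  have hcos (α : unitInterval) :
      Real.cos (p.arg / 2) ≤ Real.cos ((α : ℝ) * p.arg + -(p.arg / 2)) := by
    have hα : |(α : ℝ) - 1 / 2| ≤ 1 / 2 := abs_le.2 ⟨by linarith [α.2.1], by linarith [α.2.2]⟩
    rw [show (α : ℝ) * p.arg + -(p.arg / 2) = (α - 1 / 2) * p.arg by ring, ← Real.cos_abs,
      ← Real.cos_abs (_ * _), abs_mul, abs_div, abs_two]
    refine Real.cos_le_cos_of_nonneg_of_le_pi (by positivity) ?_ ?_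
    · linarith [Complex.abs_arg_le_pi p, abs_nonneg p.arg]
    · nlinarith [abs_nonneg p.arg]
  have hint := (integrable_cpow_unitInterval (m := m) hp).const_mul
    (Complex.exp ((-(p.arg / 2) : ℝ) * Complex.I))
  calc Real.cos (p.arg / 2) * realOrderSymbol m ‖p‖
      = ∫ α : unitInterval, Real.cos (p.arg / 2) * ‖p‖ ^ (α : ℝ) ∂m := (integral_const_mul _ _).symm
    _ ≤ ∫ α : unitInterval,
          (Complex.exp ((-(p.arg / 2) : ℝ) * Complex.I) * p ^ ((α : ℝ) : ℂ)).re ∂m := by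
        refine integral_mono ((integrable_rpow_unitInterval (norm_pos_iff.2 hp)).const_mul _)
          hint.re fun α => ?_
        rw [re_exp_mul_I_mul_cpow_ofReal, mul_comm]
        gcongr
        exact hcos α
    _ = (Complex.exp ((-(p.arg / 2) : ℝ) * Complex.I) * orderSymbol m p).re := by
        rw [orderSymbol, ← integral_const_mul]
        exact integral_re hint
    _ ≤ ‖orderSymbol m p‖ := by
        refine (Complex.re_le_norm _).trans_eq ?_
        rw [norm_mul, Complex.norm_exp_ofReal_mul_I, one_mul]

lemma realOrderSymbol_le_two_mul_norm_orderSymbol (hp : p ≠ 0) (hre : 0 ≤ p.re) :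
    realOrderSymbol m ‖p‖ ≤ 2 * ‖orderSymbol m p‖ := by
  have hcos : 1 / 2 ≤ Real.cos (p.arg / 2) := by
    rw [← Real.cos_pi_div_three, ← Real.cos_abs (p.arg / 2), abs_div, abs_two]
    refine Real.cos_le_cos_of_nonneg_of_le_pi (by positivity) (by linarith [Real.pi_pos]) ?_
    linarith [Complex.abs_arg_le_pi_div_two_iff.2 hre, Real.pi_pos]
  have hnonneg : 0 ≤ realOrderSymbol m ‖p‖ := integral_nonneg fun α => by positivity
  nlinarith [cos_half_arg_mul_realOrderSymbol_le (m := m) hp]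

lemma re_orderSymbol_nonneg (hp : p ≠ 0) (hre : 0 ≤ p.re) : 0 ≤ (orderSymbol m p).re := by
  have harg := Complex.abs_arg_le_pi_div_two_iff.2 hre
  calc (0 : ℝ) ≤ ∫ α : unitInterval, (p ^ ((α : ℝ) : ℂ)).re ∂m := integral_nonneg fun α => by
        rw [Complex.cpow_ofReal_re]
        refine mul_nonneg (by positivity) (Real.cos_nonneg_of_mem_Icc (abs_le.1 ?_))
        rw [abs_mul, abs_of_nonneg α.2.1]
        exact (mul_le_of_le_one_right (abs_nonneg _) α.2.2).trans harg
    _ = (orderSymbol m p).re := integral_re (integrable_cpow_unitInterval hp)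

lemma orderSymbol_mem_slitPlane [NeZero m] (hp : p ≠ 0) (hre : 0 ≤ p.re) :
    orderSymbol m p ∈ Complex.slitPlane := by
  have hne : orderSymbol m p ≠ 0 := norm_pos_iff.1 <| by
    linarith [realOrderSymbol_le_two_mul_norm_orderSymbol (m := m) hp hre,
      realOrderSymbol_pos (m := m) (norm_pos_iff.2 hp)]
  rw [Complex.mem_slitPlane_iff_not_le_zero, Complex.le_def]
  rintro ⟨hle, him⟩
  exact hne (Complex.ext (hle.antisymm (re_orderSymbol_nonneg hp hre)) him)

end OrderSymbol

section DecayRate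

lemma norm_complexSqrt (a : ℂ) : ‖a.sqrt‖ = √‖a‖ := by
  rw [Complex.sqrt, Real.sqrt_eq_rpow, one_div]
  exact_mod_cast Complex.norm_cpow_inv_nat a 2

lemma norm_complexSqrt_le_two_mul_re {a : ℂ} (ha : 0 ≤ a.re) : ‖a.sqrt‖ ≤ 2 * a.sqrt.re := by
  rw [norm_complexSqrt, Complex.sqrt, Complex.cpow_inv_two_re, Real.sqrt_le_left (by positivity),
    mul_pow, Real.sq_sqrt (by positivity)]
  linarith [norm_nonneg a]

lemma hasDerivAt_complexSqrt_comp {g : ℂ → ℂ} {g' p : ℂ} (hg : HasDerivAt g g' p)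
    (hp : g p ∈ Complex.slitPlane) :
    HasDerivAt (fun z => (g z).sqrt) (g' / (2 * (g p).sqrt)) p := by
  have hpow : g p ^ ((2 : ℂ)⁻¹ - 1) = (g p ^ (2 : ℂ)⁻¹)⁻¹ := by
    rw [← Complex.cpow_neg]; norm_num
  refine (hg.cpow_const hp).congr_deriv ?_
  rw [hpow, Complex.sqrt, div_eq_mul_inv, mul_inv]
  ring

variable {m : Measure unitInterval} {p : ℂ}

/-- The rate `√(p K(p))` at which the Laplace transform of the fundamental solution decays in
`|x|`. -/
noncomputable def decayRate (m : Measure unitInterval) (p : ℂ) : ℂ :=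
  (orderSymbol m p).sqrt

lemma decayRate_ofReal {r : ℝ} (hr : 0 ≤ r) : decayRate m r = √(realOrderSymbol m r) := by
  have hnonneg : 0 ≤ realOrderSymbol m r := integral_nonneg fun α => by positivity
  rw [decayRate, orderSymbol_ofReal hr, Complex.sqrt_of_nonneg (by exact_mod_cast hnonneg),
    Complex.ofReal_re]

variable [IsFiniteMeasure m]

lemma norm_decayRate_le_two_mul_re (hp : p ≠ 0) (hre : 0 ≤ p.re) :
    ‖decayRate m p‖ ≤ 2 * (decayRate m p).re :=
  norm_complexSqrt_le_two_mul_re (re_orderSymbol_nonneg hp hre)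

lemma norm_decayRate_le_mul_rpow {T : ℝ} (hT : 0 < T) (hp : T⁻¹ ≤ ‖p‖) :
    ‖decayRate m p‖ ≤ √(m.real univ * max 1 T) * ‖p‖ ^ (1 / 2 : ℝ) := by
  rw [decayRate, norm_complexSqrt, ← Real.sqrt_eq_rpow, ← Real.sqrt_mul (by positivity)]
  exact Real.sqrt_le_sqrt ((norm_orderSymbol_le p).trans (realOrderSymbol_le_mul hT hp))

lemma mul_rpow_le_norm_decayRate (hp : 1 ≤ ‖p‖) (hre : 0 ≤ p.re) (δ : unitInterval) :
    √(m.real (Ici δ) / 2) * ‖p‖ ^ (δ / 2 : ℝ) ≤ ‖decayRate m p‖ := by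
  have hp₀ : p ≠ 0 := norm_pos_iff.1 (one_pos.trans_le hp)
  rw [decayRate, norm_complexSqrt, div_eq_mul_one_div (δ : ℝ), Real.rpow_mul (norm_nonneg p),
    ← Real.sqrt_eq_rpow, ← Real.sqrt_mul (by positivity)]
  refine Real.sqrt_le_sqrt ?_
  linarith [rpow_mul_measure_Ici_le_realOrderSymbol (m := m) hp δ,
    realOrderSymbol_le_two_mul_norm_orderSymbol (m := m) hp₀ hre]

variable [NeZero m]

lemma hasDerivAt_decayRate (hp : 0 < p.re) :
    HasDerivAt (decayRate m) (deriv (orderSymbol m) p / (2 * decayRate m p)) p :=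
  hasDerivAt_complexSqrt_comp (hasDerivAt_orderSymbol (.inl hp)).differentiableAt.hasDerivAt
    (orderSymbol_mem_slitPlane (Complex.slitPlane_ne_zero (.inl hp)) hp.le)

theorem norm_deriv_decayRate_le (hp : 0 < p.re) :
    ‖deriv (decayRate m) p‖ ≤ ‖decayRate m p‖ / ‖p‖ := by
  have hp₀ : p ≠ 0 := Complex.slitPlane_ne_zero (.inl hp)
  have hsymbol := Complex.slitPlane_ne_zero (orderSymbol_mem_slitPlane (m := m) hp₀ hp.le)
  have hsq : ‖orderSymbol m p‖ = ‖decayRate m p‖ ^ 2 := by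
    rw [decayRate, norm_complexSqrt, Real.sq_sqrt (norm_nonneg _)]
  have hrate : 0 < ‖decayRate m p‖ := by
    rw [decayRate, norm_complexSqrt]; exact Real.sqrt_pos.2 (norm_pos_iff.2 hsymbol)
  rw [(hasDerivAt_decayRate hp).deriv, norm_div, norm_mul, Complex.norm_ofNat,
    div_le_iff₀ (by positivity)]
  calc ‖deriv (orderSymbol m) p‖
      ≤ realOrderSymbol m ‖p‖ / ‖p‖ := norm_deriv_orderSymbol_le (.inl hp)
    _ ≤ 2 * ‖orderSymbol m p‖ / ‖p‖ := by
        gcongr; exact realOrderSymbol_le_two_mul_norm_orderSymbol hp₀ hp.le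
    _ = ‖decayRate m p‖ / ‖p‖ * (2 * ‖decayRate m p‖) := by rw [hsq]; ring

end DecayRate

section FundamentalSolution

open scoped Topology

variable {m : Measure unitInterval} {p : ℂ} {L T : ℝ}

/-- The Laplace transform in time of the fundamental solution at distance `L` from the origin, for
orders distributed according to `m`. -/
noncomputable def fundamentalTransform (m : Measure unitInterval) (L : ℝ) (p : ℂ) : ℂ :=
  decayRate m p / (2 * p) * Complex.exp (-L * decayRate m p)

lemma fundamentalTransform_ofReal {r : ℝ} (hr : 0 ≤ r) : fundamentalTransform m L r =
    ((1 / 2 * (√(realOrderSymbol m r) / r) * Real.exp (-L * √(realOrderSymbol m r)) : ℝ) : ℂ) := by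
  rw [fundamentalTransform, decayRate_ofReal hr]
  push_cast
  ring

variable [IsFiniteMeasure m]

lemma hasDerivAt_fundamentalTransform [NeZero m] (hp : 0 < p.re) :
    HasDerivAt (fundamentalTransform m L)
      ((deriv (decayRate m) p * (1 - L * decayRate m p) - decayRate m p / p) / (2 * p) *
        Complex.exp (-L * decayRate m p)) p := by
  have hp₀ : p ≠ 0 := Complex.slitPlane_ne_zero (.inl hp)
  have hrate := (hasDerivAt_decayRate (m := m) hp).differentiableAt.hasDerivAt
  refine ((hrate.div ((hasDerivAt_id p).const_mul 2) (by simpa using hp₀)).mul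
    (hrate.const_mul (-L : ℂ)).cexp).congr_deriv ?_
  simp only [id, Pi.div_apply]
  field_simp
  ring

theorem norm_deriv_fundamentalTransform_le [NeZero m] (hL : 0 ≤ L) (hp : 0 < p.re) :
    ‖deriv (fundamentalTransform m L) p‖ ≤ ‖decayRate m p‖ / ‖p‖ ^ 2 := by
  have hp₀ : p ≠ 0 := Complex.slitPlane_ne_zero (.inl hp)
  have hnum : ‖deriv (decayRate m) p * (1 - L * decayRate m p) - decayRate m p / p‖
      ≤ ‖decayRate m p‖ / ‖p‖ * (2 + L * ‖decayRate m p‖) := by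
    have hfactor : ‖1 - L * decayRate m p‖ ≤ 1 + L * ‖decayRate m p‖ := by
      simpa [abs_of_nonneg hL] using norm_sub_le 1 (L * decayRate m p)
    calc _ ≤ ‖deriv (decayRate m) p‖ * ‖1 - L * decayRate m p‖ + ‖decayRate m p‖ / ‖p‖ := by
          simpa only [norm_mul, norm_div] using norm_sub_le
            (deriv (decayRate m) p * (1 - L * decayRate m p)) (decayRate m p / p)
      _ ≤ ‖decayRate m p‖ / ‖p‖ * (1 + L * ‖decayRate m p‖) + ‖decayRate m p‖ / ‖p‖ := by
          gcongr; exact norm_deriv_decayRate_le hp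
      _ = _ := by ring
  have hexp : (2 + L * ‖decayRate m p‖) * Real.exp (-L * (decayRate m p).re) ≤ 2 := by
    have hlin : 2 + L * ‖decayRate m p‖ ≤ 2 * Real.exp (L * (decayRate m p).re) := by
      nlinarith [Real.add_one_le_exp (L * (decayRate m p).re),
        norm_decayRate_le_two_mul_re (m := m) hp₀ hp.le]
    rwa [neg_mul, Real.exp_neg, ← div_eq_mul_inv, div_le_iff₀ (Real.exp_pos _)]
  rw [(hasDerivAt_fundamentalTransform hp).deriv, norm_mul, norm_div, norm_mul 2,
    Complex.norm_ofNat, Complex.norm_exp, ← Complex.ofReal_neg, Complex.re_ofReal_mul]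
  calc _ ≤ ‖decayRate m p‖ / ‖p‖ * (2 + L * ‖decayRate m p‖) / (2 * ‖p‖) *
          Real.exp (-L * (decayRate m p).re) := by gcongr
    _ = ‖decayRate m p‖ / (2 * ‖p‖ ^ 2) *
          ((2 + L * ‖decayRate m p‖) * Real.exp (-L * (decayRate m p).re)) := by
        field_simp
    _ ≤ ‖decayRate m p‖ / (2 * ‖p‖ ^ 2) * 2 := by gcongr
    _ = ‖decayRate m p‖ / ‖p‖ ^ 2 := by field_simp

lemma norm_deriv_fundamentalTransform_le_rpow [NeZero m] (hL : 0 ≤ L) (hT : 0 < T)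
    (hp : T⁻¹ ≤ p.re) :
    ‖deriv (fundamentalTransform m L) p‖ ≤ √(m.real univ * max 1 T) * ‖p‖ ^ (-(3 / 2) : ℝ) := by
  have hre : 0 < p.re := (inv_pos.2 hT).trans_le hp
  have hp₀ : 0 < ‖p‖ := hre.trans_le (Complex.re_le_norm p)
  calc ‖deriv (fundamentalTransform m L) p‖ ≤ ‖decayRate m p‖ / ‖p‖ ^ 2 :=
        norm_deriv_fundamentalTransform_le hL hre
    _ ≤ √(m.real univ * max 1 T) * ‖p‖ ^ (1 / 2 : ℝ) / ‖p‖ ^ 2 := by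
        gcongr; exact norm_decayRate_le_mul_rpow hT (hp.trans (Complex.re_le_norm p))
    _ = √(m.real univ * max 1 T) * ‖p‖ ^ (-(3 / 2) : ℝ) := by
        rw [mul_div_assoc, ← Real.rpow_natCast, ← Real.rpow_sub hp₀]; norm_num

lemma norm_fundamentalTransform_le (hL : 0 ≤ L) (hp : p ≠ 0) (hre : 0 ≤ p.re) :
    ‖fundamentalTransform m L p‖ ≤
      ‖decayRate m p‖ / (2 * ‖p‖) * Real.exp (-L * (‖decayRate m p‖ / 2)) := by
  rw [fundamentalTransform, norm_mul, norm_div, norm_mul 2, Complex.norm_ofNat, Complex.norm_exp,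
    ← Complex.ofReal_neg, Complex.re_ofReal_mul, neg_mul, neg_mul]
  gcongr
  linarith [norm_decayRate_le_two_mul_re (m := m) hp hre]

lemma rpow_le_mul_exp {b k x : ℝ} (hb : 0 < b) (hk : 0 < k) (hx : 0 ≤ x) :
    x ^ k ≤ (k / b) ^ k * Real.exp (b * x) := by
  have hlin : x ≤ k / b * Real.exp (b * x / k) :=
    calc x = k / b * (b * x / k) := by field_simp
      _ ≤ k / b * Real.exp (b * x / k) := by gcongr; linarith [Real.add_one_le_exp (b * x / k)]
  calc x ^ k ≤ (k / b * Real.exp (b * x / k)) ^ k := by gcongr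
    _ = (k / b) ^ k * Real.exp (b * x) := by
        rw [Real.mul_rpow (by positivity) (Real.exp_pos _).le, ← Real.exp_mul,
          div_mul_cancel₀ _ hk.ne']

/- Half of the exponential factor absorbs the powers of `‖decayRate m p‖` that are exchanged for
`‖p‖⁻²`; the other half is the decay in `L`. -/
theorem norm_fundamentalTransform_le_exp_mul_rpow {b d δ : ℝ} (hb : 0 < b) (hd : 0 < d)
    (hδ : 0 < δ) (hdL : d ≤ L) (hp : 1 ≤ ‖p‖) (hre : 0 ≤ p.re)
    (hrate : b * ‖p‖ ^ (δ / 2) ≤ ‖decayRate m p‖) :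
    ‖fundamentalTransform m L p‖ ≤
      b⁻¹ ^ (2 / δ) * ((2 / δ + 1) / (d / 4)) ^ (2 / δ + 1) * Real.exp (-(b / 4) * L) *
        ‖p‖ ^ (-2 : ℝ) := by
  have hp₀ : 0 < ‖p‖ := one_pos.trans_le hp
  set k := 2 / δ with hk
  set x := ‖decayRate m p‖
  have hbx : b ≤ x :=
    (le_mul_of_one_le_right hb.le (Real.one_le_rpow hp (by positivity))).trans hrate
  have hx₀ : 0 < x := hb.trans_le hbx
  have hnorm : ‖p‖ ≤ b⁻¹ ^ k * x ^ k := by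
    rw [← Real.mul_rpow (by positivity) hx₀.le, inv_mul_eq_div]
    calc ‖p‖ = (‖p‖ ^ (δ / 2)) ^ k := by
          rw [← Real.rpow_mul hp₀.le, hk, div_mul_div_cancel₀' hδ.ne', div_self two_ne_zero,
            Real.rpow_one]
      _ ≤ (x / b) ^ k := by gcongr; rwa [le_div_iff₀' hb]
  have hsplit : Real.exp (-L * (x / 2)) ≤ Real.exp (-(d / 4 * x)) * Real.exp (-(b / 4) * L) := by
    rw [← Real.exp_add, Real.exp_le_exp]
    nlinarith
  have habsorb : x ^ (k + 1) * Real.exp (-(d / 4 * x)) ≤ ((k + 1) / (d / 4)) ^ (k + 1) := by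
    rw [Real.exp_neg, ← div_eq_mul_inv, div_le_iff₀ (Real.exp_pos _)]
    exact rpow_le_mul_exp (by positivity) (by positivity) hx₀.le
  calc ‖fundamentalTransform m L p‖
      ≤ x / (2 * ‖p‖) * Real.exp (-L * (x / 2)) :=
        norm_fundamentalTransform_le (hd.le.trans hdL) (norm_pos_iff.1 hp₀) hre
    _ ≤ x * ‖p‖ * ‖p‖ ^ (-2 : ℝ) * Real.exp (-L * (x / 2)) := by
        rw [Real.rpow_neg hp₀.le, Real.rpow_two]
        gcongr
        field_simp
        norm_num
    _ ≤ x * (b⁻¹ ^ k * x ^ k) * ‖p‖ ^ (-2 : ℝ) *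
          (Real.exp (-(d / 4 * x)) * Real.exp (-(b / 4) * L)) := by gcongr
    _ = b⁻¹ ^ k * (x ^ (k + 1) * Real.exp (-(d / 4 * x))) * Real.exp (-(b / 4) * L) *
          ‖p‖ ^ (-2 : ℝ) := by rw [Real.rpow_add_one hx₀.ne']; ring
    _ ≤ _ := by gcongr

end FundamentalSolution

section Estimates

open scoped Topology

variable {m : Measure unitInterval} {Z : ℝ → ℝ → ℝ}

/-- `Z` is the fundamental solution, in dimension one, of the ultraslow diffusion equation with
orders distributed according to `m`, characterized by continuity in `t` and by its
Laplace transform in `t` on the positive half-line. -/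
structure IsFundamentalSolution (m : Measure unitInterval) (Z : ℝ → ℝ → ℝ) : Prop where
  continuousOn (x : ℝ) : ContinuousOn (fun t => Z t x) (Ioi 0)
  integrableOn (r : ℝ) (hr : 0 < r) (x : ℝ) :
    IntegrableOn (fun t : ℝ => Real.exp (-r * t) * Z t x) (Ioi 0)
  integral_eq (r : ℝ) (hr : 0 < r) (x : ℝ) :
    ∫ t in Ioi (0 : ℝ), Real.exp (-r * t) * Z t x =
      1 / 2 * (√(realOrderSymbol m r) / r) * Real.exp (-|x| * √(realOrderSymbol m r))

namespace IsFundamentalSolution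

lemma continuousAt_ofReal (hZ : IsFundamentalSolution m Z) {t : ℝ} (ht : 0 < t) (x : ℝ) :
    ContinuousAt (fun t => (Z t x : ℂ)) t :=
  Complex.continuous_ofReal.continuousAt.comp ((hZ.continuousOn x).continuousAt (Ioi_mem_nhds ht))

lemma laplaceConvergent (hZ : IsFundamentalSolution m Z) (x : ℝ) {r : ℝ} (hr : 0 < r) :
    LaplaceConvergent (fun t => (Z t x : ℂ)) r :=
  (hZ.integrableOn r hr x).ofReal.congr (.of_forall fun t => by simp)

lemma laplaceTransform_ofReal (hZ : IsFundamentalSolution m Z) (x : ℝ) {r : ℝ} (hr : 0 < r) :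
    laplaceTransform (fun t => (Z t x : ℂ)) r = fundamentalTransform m |x| r := by
  rw [fundamentalTransform_ofReal hr.le, ← hZ.integral_eq r hr x, ← integral_complex_ofReal,
    laplaceTransform]
  push_cast
  rfl

variable [IsFiniteMeasure m] [NeZero m]

theorem laplaceTransform_eqOn (hZ : IsFundamentalSolution m Z) (x : ℝ) :
    EqOn (laplaceTransform fun t => (Z t x : ℂ)) (fundamentalTransform m |x|) {p | 0 < p.re} :=
  eqOn_re_pos_of_eq_ofReal
    (fun p hp => (hasDerivAt_laplaceTransform (hZ.laplaceConvergent x (half_pos hp))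
      (by simpa using hp)).2.differentiableAt.differentiableWithinAt)
    (fun _ hp => (hasDerivAt_fundamentalTransform hp).differentiableAt.differentiableWithinAt)
    fun _ hr => hZ.laplaceTransform_ofReal x hr

theorem abs_le_mul_rpow (hZ : IsFundamentalSolution m Z) {t T : ℝ} (ht : 0 < t) (htT : t ≤ T)
    (x : ℝ) :
    |Z t x| ≤ laplaceInversionConst (3 / 2) * √(m.real univ * max 1 T) * Real.exp 1 *
      t ^ (-(1 / 2) : ℝ) := by
  have hT : 0 < T := ht.trans_le htT
  have hderiv (p : ℂ) (hp : T⁻¹ ≤ p.re) : ‖deriv (laplaceTransform fun t => (Z t x : ℂ)) p‖ ≤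
      √(m.real univ * max 1 T) * ‖p‖ ^ (-(3 / 2) : ℝ) := by
    have hnhds : {p : ℂ | 0 < p.re} ∈ 𝓝 p :=
      (isOpen_lt continuous_const Complex.continuous_re).mem_nhds ((inv_pos.2 hT).trans_le hp)
    rw [((hZ.laplaceTransform_eqOn x).eventuallyEq_of_mem hnhds).deriv_eq]
    exact norm_deriv_fundamentalTransform_le_rpow (abs_nonneg x) hT hp
  have hbound := norm_le_rpow_of_norm_deriv_laplaceTransform_le (by norm_num)
    (fun _ => hZ.laplaceConvergent x) hderiv ht htT (hZ.continuousAt_ofReal ht x)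
  rwa [Complex.norm_real, show (3 / 2 - 2 : ℝ) = -(1 / 2) by norm_num] at hbound

theorem exists_abs_le_mul_exp (hZ : IsFundamentalSolution m Z) (hm : m (Ioi 0) ≠ 0) {d : ℝ}
    (hd : 0 < d) :
    ∃ C : ℝ, ∃ a > (0 : ℝ), ∀ t x : ℝ, 0 < t → d ≤ |x| →
      |Z t x| ≤ C * Real.exp (-a * |x|) * Real.exp t := by
  obtain ⟨δ, hδ, hmδ⟩ := exists_measureReal_Ici_pos hm
  set b := √(m.real (Ici δ) / 2)
  have hb : 0 < b := Real.sqrt_pos.2 (half_pos hmδ)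
  refine ⟨laplaceInversionConst 2 *
    (b⁻¹ ^ (2 / δ : ℝ) * ((2 / δ + 1) / (d / 4)) ^ (2 / δ + 1 : ℝ)), b / 4, by positivity,
    fun t x ht hx => ?_⟩
  have hline (p : ℂ) (hp : p.re = 1) := calc
    ‖laplaceTransform (fun t => (Z t x : ℂ)) p‖ = ‖fundamentalTransform m |x| p‖ := by
        rw [hZ.laplaceTransform_eqOn x (show 0 < p.re from hp ▸ one_pos)]
    _ ≤ _ := norm_fundamentalTransform_le_exp_mul_rpow hb hd hδ hx
        (hp ▸ Complex.re_le_norm p) (hp ▸ zero_le_one)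
        (mul_rpow_le_norm_decayRate (hp ▸ Complex.re_le_norm p) (hp ▸ zero_le_one) δ)
  have hbound := norm_le_of_norm_laplaceTransform_le_rpow one_pos one_lt_two
    (hZ.laplaceConvergent x one_pos) hline ht (hZ.continuousAt_ofReal ht x)
  simpa only [Complex.norm_real, Real.norm_eq_abs, Real.one_rpow, mul_one, one_mul, mul_assoc]
    using hbound

end IsFundamentalSolution

theorem fundamental_solution_estimates_general [IsFiniteMeasure m] (hm : m (Ioi 0) ≠ 0)
    (hZ : IsFundamentalSolution m Z) (T : ℝ) {d : ℝ} (hd : 0 < d) :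
    ∃ C > (0 : ℝ), ∃ a > (0 : ℝ),
      (∀ t x : ℝ, 0 < t → t ≤ T → |Z t x| ≤ C * t ^ (-(1 / 2 : ℝ))) ∧
      (∀ t x : ℝ, 0 < t → t ≤ T → d ≤ |x| → |Z t x| ≤ C * Real.exp (-a * |x|)) := by
  have : NeZero m := ⟨fun h => hm (by simp [h])⟩
  obtain ⟨C, a, ha, hfar⟩ := hZ.exists_abs_le_mul_exp hm hd
  set B := laplaceInversionConst (3 / 2) * √(m.real univ * max 1 T) * Real.exp 1
  refine ⟨max 1 (max B (|C| * Real.exp T)), by positivity, a, ha, fun t x ht htT => ?_,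
    fun t x ht htT hx => ?_⟩
  · refine (hZ.abs_le_mul_rpow ht htT x).trans ?_
    gcongr
    exact (le_max_left _ _).trans (le_max_right _ _)
  · calc |Z t x| ≤ C * Real.exp (-a * |x|) * Real.exp t := hfar t x ht hx
      _ ≤ |C| * Real.exp (-a * |x|) * Real.exp T := by gcongr; exact le_abs_self C
      _ = |C| * Real.exp T * Real.exp (-a * |x|) := by ring
      _ ≤ _ := by gcongr; exact (le_max_right _ _).trans (le_max_right _ _)

end Estimates

section Density

variable {μ : ℝ → ℝ}

/-- The measure on `[0, 1]` whose density is the weight `μ` (more precisely, its positive part). -/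
noncomputable def orderMeasure (μ : ℝ → ℝ) : Measure unitInterval :=
  volume.withDensity fun α => ENNReal.ofReal (μ α)

lemma isFiniteMeasure_orderMeasure (hμ : Integrable fun α : unitInterval => μ α) :
    IsFiniteMeasure (orderMeasure μ) :=
  isFiniteMeasure_withDensity_ofReal hμ.hasFiniteIntegral

lemma orderMeasure_Ioi_zero_ne_zero (hμ : Integrable fun α : unitInterval => μ α)
    (hpos : ∀ α ∈ Ioc (0 : ℝ) 1, 0 < μ α) : orderMeasure μ (Ioi 0) ≠ 0 := by
  have hsupp : Ioi (0 : unitInterval) ⊆ {α | ENNReal.ofReal (μ α) ≠ 0} := fun α hα =>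
    (ENNReal.ofReal_pos.2 (hpos α ⟨hα, α.2.2⟩)).ne'
  have hmeas := hμ.aestronglyMeasurable.aemeasurable.ennreal_ofReal
  rw [orderMeasure, Ne, withDensity_apply_eq_zero' hmeas, inter_eq_right.2 hsupp,
    unitInterval.volume_Ioi]
  simp

lemma realOrderSymbol_orderMeasure (hμ : Integrable fun α : unitInterval => μ α)
    (hnonneg : ∀ α ∈ Icc (0 : ℝ) 1, 0 ≤ μ α) {r : ℝ} (hr : 0 < r) :
    realOrderSymbol (orderMeasure μ) r = r * Kreal μ r :=
  calc realOrderSymbol (orderMeasure μ) r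
      = ∫ α : unitInterval, μ α * r ^ (α : ℝ) := by
        rw [realOrderSymbol, orderMeasure, integral_withDensity_eq_integral_toReal_smul₀
          hμ.aestronglyMeasurable.aemeasurable.ennreal_ofReal (.of_forall fun _ => by simp)]
        simp only [ENNReal.toReal_ofReal (hnonneg _ (Subtype.prop _)), smul_eq_mul]
    _ = ∫ α in (0 : ℝ)..1, μ α * r ^ α := by
        rw [intervalIntegral.integral_of_le zero_le_one, ← integral_Icc_eq_integral_Ioc]
        exact integral_subtype measurableSet_Icc fun α => μ α * r ^ α
    _ = r * Kreal μ r := by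
        rw [Kreal, ← intervalIntegral.integral_const_mul]
        congr with α
        rw [Real.rpow_sub_one hr.ne']
        field_simp

lemma isFundamentalSolution_orderMeasure (hμ : Integrable fun α : unitInterval => μ α)
    (hnonneg : ∀ α ∈ Icc (0 : ℝ) 1, 0 ≤ μ α) {Z : ℝ → ℝ → ℝ}
    (hZc : ∀ x : ℝ, ContinuousOn (fun t => Z t x) (Ioi 0))
    (hZlap : ∀ p : ℝ, 0 < p → ∀ x : ℝ,
      IntegrableOn (fun t : ℝ => Real.exp (-p * t) * Z t x) (Ioi 0) ∧
      ∫ t in Ioi (0 : ℝ), Real.exp (-p * t) * Z t x =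
        1 / 2 * Kreal μ p / √(p * Kreal μ p) * Real.exp (-|x| * √(p * Kreal μ p))) :
    IsFundamentalSolution (orderMeasure μ) Z where
  continuousOn := hZc
  integrableOn p hp x := (hZlap p hp x).1
  integral_eq p hp x := by
    have hfactor : Kreal μ p / √(p * Kreal μ p) = √(p * Kreal μ p) / p := by
      rw [eq_div_iff hp.ne', div_mul_eq_mul_div, mul_comm (Kreal μ p), Real.div_sqrt]
    rw [(hZlap p hp x).2, realOrderSymbol_orderMeasure hμ hnonneg hp, mul_div_assoc, hfactor]

end Density

theorem fundamental_solution_estimates (μ μ₁ : ℝ → ℝ) (ν ρ : ℝ)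
    (hC2 : ContDiffOn ℝ 2 μ (Set.Icc 0 1))
    (hν : 0 ≤ ν) (hρ : 0 < ρ)
    (hμ₁c : ContinuousOn μ₁ (Set.Icc 0 1))
    (hμform : ∀ α ∈ Set.Icc (0:ℝ) 1, μ α = α ^ ν * μ₁ α)
    (hμ₁low : ∀ α ∈ Set.Icc (0:ℝ) 1, ρ ≤ μ₁ α)
    (Z : ℝ → ℝ → ℝ)
    (hZc : ∀ x : ℝ, ContinuousOn (fun t => Z t x) (Set.Ioi 0))
    (hZlap : ∀ p : ℝ, 0 < p → ∀ x : ℝ,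
      IntegrableOn (fun t : ℝ => Real.exp (-p * t) * Z t x) (Set.Ioi 0) ∧
      ∫ t in Set.Ioi (0:ℝ), Real.exp (-p * t) * Z t x
        = (1 / 2) * Kreal μ p / Real.sqrt (p * Kreal μ p)
            * Real.exp (-|x| * Real.sqrt (p * Kreal μ p))) :
    ∀ T > (0:ℝ), ∀ ε ∈ Set.Ioo (0:ℝ) 1, ∃ C > (0:ℝ), ∃ a > (0:ℝ),
      (∀ t x : ℝ, 0 < t → t ≤ T → |x| ≤ ε →
        |Z t x| ≤ C * t ^ (-(1 / 2 : ℝ))) ∧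
      (∀ t x : ℝ, 0 < t → t ≤ T → ε⁻¹ ≤ |x| →
        |Z t x| ≤ C * Real.exp (-a * |x|)) := by
  intro T _ ε hε
  have hμ : Integrable fun α : unitInterval => μ α :=
    integrable_unitInterval_of_continuous
      (continuousOn_iff_continuous_domRestrict.1 hC2.continuousOn)
  have hnonneg (α : ℝ) (hα : α ∈ Icc (0 : ℝ) 1) : 0 ≤ μ α :=
    hμform α hα ▸ mul_nonneg (Real.rpow_nonneg hα.1 ν) (hρ.le.trans (hμ₁low α hα))
  have hpos (α : ℝ) (hα : α ∈ Ioc (0 : ℝ) 1) : 0 < μ α :=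
    hμform α (Ioc_subset_Icc_self hα) ▸
      mul_pos (Real.rpow_pos_of_pos hα.1 ν) (hρ.trans_le (hμ₁low α (Ioc_subset_Icc_self hα)))
  have := isFiniteMeasure_orderMeasure hμ
  obtain ⟨C, hC, a, ha, hnear, hfar⟩ := fundamental_solution_estimates_general
    (orderMeasure_Ioi_zero_ne_zero hμ hpos)
    (isFundamentalSolution_orderMeasure hμ hnonneg hZc hZlap) T (inv_pos.2 hε.1)
  exact ⟨C, hC, a, ha, fun t x ht htT _ => hnear t x ht htT, hfar⟩
end
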